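/- arXiv:2008.08675 — 4 statements merged into one kernel-verified Lean document; each statement's English description precedes it below -/
import Mathlib

section
/- Let f be a deep linear fully connected network of depth d and width n, and let Θ be its neural tangent kernel. Then for all inputs x, x' ∈ ℝ^{d_0} and all n ≥ 1, E_θ[Θ(x,x')] = (d+1) ⟨x, x'⟩ / d_0, independent of n. -/
open MeasureTheory ProbabilityTheory

namespace DeepLinearFC

/-- Parameter index type for a deep linear fully connected network of depth `d` and width `n`
on inputs in `ℝ^{d0}`: the readout vector `v` (`Fin n`), the first-layer matrix `W^(1)`
(`Fin n × Fin d0`), and the higher-layer matrices `W^(2), …, W^(d)`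
(`Fin (d-1) × Fin n × Fin n`). -/
abbrev Param (d0 d n : ℕ) : Type :=
  Fin n ⊕ (Fin n × Fin d0) ⊕ (Fin (d - 1) × Fin n × Fin n)

/-- Hidden activations: `hidden d0 d n θ x ℓ` is `W^(ℓ+1) ⋯ W^(2) W^(1) x`. -/
def hidden (d0 d n : ℕ) (θ : Param d0 d n → ℝ) (x : Fin d0 → ℝ) : ℕ → Fin n → ℝ
  | 0 => fun i => ∑ j : Fin d0, θ (.inr (.inl (i, j))) * x j
  | ℓ + 1 => fun i => ∑ j : Fin n,
      (if h : ℓ < d - 1 then θ (.inr (.inr (⟨ℓ, h⟩, i, j))) else 0) * hidden d0 d n θ x ℓ j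

/-- The deep linear fully connected network
`f(x) = n^{-d/2} d0^{-1/2} vᵀ W^(d) ⋯ W^(2) W^(1) x`. -/
noncomputable def net (d0 d n : ℕ) (θ : Param d0 d n → ℝ) (x : Fin d0 → ℝ) : ℝ :=
  (Real.sqrt ((n : ℝ) ^ d * (d0 : ℝ)))⁻¹ *
    ∑ i : Fin n, θ (.inl i) * hidden d0 d n θ x (d - 1) i

/-- All parameters are i.i.d. standard Gaussians. -/
noncomputable def gaussParam (d0 d n : ℕ) : Measure (Param d0 d n → ℝ) :=
  Measure.pi fun _ => gaussianReal 0 1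

/-- The neural tangent kernel `Θ(x,x') = Σ_μ ∂f(x)/∂θ_μ ⬝ ∂f(x')/∂θ_μ`. -/
noncomputable def NTK (d0 d n : ℕ) (θ : Param d0 d n → ℝ) (x x' : Fin d0 → ℝ) : ℝ :=
  ∑ μ : Param d0 d n,
    fderiv ℝ (fun θ' => net d0 d n θ' x) θ (Pi.single μ 1) *
    fderiv ℝ (fun θ' => net d0 d n θ' x') θ (Pi.single μ 1)

section Monomials

variable {P : Type*} [Fintype P] [DecidableEq P]

lemma integral_sq_gauss : ∫ t : ℝ, t * t ∂(gaussianReal 0 1) = 1 := by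
  have h := variance_fun_id_gaussianReal (μ := 0) (v := 1)
  rw [variance_of_integral_eq_zero (by fun_prop) (by simp)] at h
  simpa [pow_two] using h

lemma integrable_factor {P : Type*} [DecidableEq P] (A B : Finset P) (p : P) :
    Integrable (fun t : ℝ => (if p ∈ A then t else 1) * (if p ∈ B then t else 1))
      (gaussianReal 0 1) := by
  have h1 : Integrable (fun t : ℝ => t) (gaussianReal 0 1) :=
    (memLp_id_gaussianReal 1).integrable (by simp)
  have h2 : Integrable (fun t : ℝ => t * t) (gaussianReal 0 1) := by
    have := (memLp_id_gaussianReal (μ := 0) (v := 1) 2).integrable_sq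
    simpa [pow_two] using this
  by_cases hA : p ∈ A <;> by_cases hB : p ∈ B <;> simp [hA, hB, h1, h2]

lemma prod_mul_prod_eq (A B : Finset P) (θ : P → ℝ) :
    (∏ p ∈ A, θ p) * (∏ p ∈ B, θ p)
      = ∏ p, (fun t : ℝ => (if p ∈ A then t else 1) * (if p ∈ B then t else 1)) (θ p) := by
  rw [Finset.prod_mul_distrib]
  simp only [Finset.prod_ite_mem, Finset.univ_inter]

lemma integrable_mono (A B : Finset P) :
    Integrable (fun θ : P → ℝ => (∏ p ∈ A, θ p) * (∏ p ∈ B, θ p))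
      (Measure.pi fun _ => gaussianReal 0 1) := by
  simp_rw [prod_mul_prod_eq]
  exact Integrable.fintype_prod (fun p => integrable_factor A B p)

lemma integral_mono_mul (A B : Finset P) :
    ∫ θ : P → ℝ, (∏ p ∈ A, θ p) * (∏ p ∈ B, θ p) ∂(Measure.pi fun _ => gaussianReal 0 1)
      = if A = B then 1 else 0 := by
  simp_rw [prod_mul_prod_eq]
  rw [integral_fintype_prod_eq_prod
    (fun p (t : ℝ) => (if p ∈ A then t else 1) * (if p ∈ B then t else 1))]
  split_ifs with h
  · subst h
    apply Finset.prod_eq_one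
    intro p _
    by_cases hA : p ∈ A <;> simp [hA, integral_sq_gauss]
  · obtain ⟨p, hp⟩ : ∃ p, ¬ (p ∈ A ↔ p ∈ B) := by
      by_contra! hc
      exact h (Finset.ext hc)
    apply Finset.prod_eq_zero (Finset.mem_univ p)
    by_cases hA : p ∈ A <;> by_cases hB : p ∈ B <;> simp_all

lemma fderiv_poly {Γ : Type*} [Fintype Γ] (S : Γ → Finset P) (a : Γ → ℝ) (θ : P → ℝ) (q : P) :
    fderiv ℝ (fun θ' : P → ℝ => ∑ γ, a γ * ∏ p ∈ S γ, θ' p) θ (Pi.single q 1)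
      = ∑ γ, a γ * (if q ∈ S γ then ∏ p ∈ (S γ).erase q, θ p else 0) := by
  have h : HasFDerivAt (fun θ' : P → ℝ => ∑ γ, a γ * ∏ p ∈ S γ, θ' p)
      (∑ γ, a γ • ∑ p ∈ S γ, (∏ r ∈ (S γ).erase p, θ r) •
        (ContinuousLinearMap.proj p : (P → ℝ) →L[ℝ] ℝ)) θ := by
    apply HasFDerivAt.fun_sum
    intro γ _
    apply HasFDerivAt.const_mul
    apply HasFDerivAt.finsetProd
    intro p _
    exact hasFDerivAt_apply p θ
  rw [h.fderiv]
  simp [Pi.single_apply]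

lemma integral_ntk_poly {Γ : Type*} [Fintype Γ] (S : Γ → Finset P)
    (hS : Function.Injective S) (k : ℕ) (hk : ∀ γ, (S γ).card = k) (a b : Γ → ℝ) :
    ∫ θ : P → ℝ, ∑ q, fderiv ℝ (fun θ' : P → ℝ => ∑ γ, a γ * ∏ p ∈ S γ, θ' p) θ (Pi.single q 1) *
        fderiv ℝ (fun θ' : P → ℝ => ∑ γ, b γ * ∏ p ∈ S γ, θ' p) θ (Pi.single q 1)
        ∂(Measure.pi fun _ => gaussianReal 0 1)
      = k * ∑ γ, a γ * b γ := by
  classical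
  have e : ∀ θ : P → ℝ,
      (∑ q, fderiv ℝ (fun θ' : P → ℝ => ∑ γ, a γ * ∏ p ∈ S γ, θ' p) θ (Pi.single q 1) *
        fderiv ℝ (fun θ' : P → ℝ => ∑ γ, b γ * ∏ p ∈ S γ, θ' p) θ (Pi.single q 1))
      = ∑ q, ∑ γ, ∑ δ, (if q ∈ S γ ∧ q ∈ S δ then a γ * b δ else 0) *
          ((∏ p ∈ (S γ).erase q, θ p) * ∏ p ∈ (S δ).erase q, θ p) := by
    intro θ
    refine Finset.sum_congr rfl fun q _ => ?_
    rw [fderiv_poly, fderiv_poly, Finset.sum_mul_sum]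
    refine Finset.sum_congr rfl fun γ _ => Finset.sum_congr rfl fun δ _ => ?_
    by_cases h1 : q ∈ S γ <;> by_cases h2 : q ∈ S δ <;> simp [h1, h2]
    ring
  simp_rw [e]
  have hi : ∀ q γ δ, Integrable (fun θ : P → ℝ =>
      (if q ∈ S γ ∧ q ∈ S δ then a γ * b δ else 0) *
          ((∏ p ∈ (S γ).erase q, θ p) * ∏ p ∈ (S δ).erase q, θ p))
      (Measure.pi fun _ => gaussianReal 0 1) :=
    fun q γ δ => (integrable_mono _ _).const_mul _
  rw [integral_finsetSum _ fun q _ => integrable_finsetSum _ fun γ _ =>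
    integrable_finsetSum _ fun δ _ => hi q γ δ]
  have e2 : ∀ q, ∫ θ : P → ℝ, ∑ γ, ∑ δ, (if q ∈ S γ ∧ q ∈ S δ then a γ * b δ else 0) *
          ((∏ p ∈ (S γ).erase q, θ p) * ∏ p ∈ (S δ).erase q, θ p)
          ∂(Measure.pi fun _ => gaussianReal 0 1)
        = ∑ γ, if q ∈ S γ then a γ * b γ else 0 := by
    intro q
    rw [integral_finsetSum _ fun γ _ => integrable_finsetSum _ fun δ _ => hi q γ δ]
    refine Finset.sum_congr rfl fun γ _ => ?_
    rw [integral_finsetSum _ fun δ _ => hi q γ δ, Finset.sum_eq_single γ]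
    · rw [integral_const_mul, integral_mono_mul]
      simp
    · intro δ _ hδ
      rw [integral_const_mul, integral_mono_mul]
      by_cases h : q ∈ S γ ∧ q ∈ S δ
      · rw [if_neg (c := (S γ).erase q = (S δ).erase q), mul_zero]
        intro h'
        apply hδ
        apply hS
        rw [← Finset.insert_erase h.1, ← Finset.insert_erase h.2, h']
      · simp [h]
    · simp
  simp_rw [e2]
  rw [Finset.sum_comm, Finset.mul_sum]
  refine Finset.sum_congr rfl fun γ _ => ?_
  simp [hk]

end Monomials

/-- Higher-layer weights as a function of a natural number layer index. -/
noncomputable def wt (d0 d n : ℕ) (θ : Param d0 d n → ℝ) (l : ℕ) (i j : Fin n) : ℝ :=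
  if h : l < d - 1 then θ (.inr (.inr (⟨l, h⟩, i, j))) else 0

lemma hidden_expand (d0 d n : ℕ) (θ : Param d0 d n → ℝ) (x : Fin d0 → ℝ) (l : ℕ) :
    ∀ g : Fin n → ℝ, ∑ i, g i * hidden d0 d n θ x l i
      = ∑ p : Fin (l + 1) → Fin n, ∑ j : Fin d0, x j * (g (p (Fin.last l)) *
          (θ (.inr (.inl (p 0, j))) *
            ∏ k : Fin l, wt d0 d n θ k (p k.succ) (p k.castSucc))) := by
  induction l with
  | zero =>
    intro g
    rw [← (Equiv.funUnique (Fin 1) (Fin n)).symm.sum_comp]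
    refine Finset.sum_congr rfl fun i _ => ?_
    simp only [hidden, Finset.mul_sum]
    refine Finset.sum_congr rfl fun j _ => ?_
    simp [Equiv.funUnique]
    ring
  | succ l ih =>
    intro g
    rw [← (Fin.snocEquiv (fun _ : Fin (l + 2) => Fin n)).sum_comp, Fintype.sum_prod_type]
    refine Finset.sum_congr rfl fun i _ => ?_
    have h : hidden d0 d n θ x (l + 1) i = ∑ j, wt d0 d n θ l i j * hidden d0 d n θ x l j := rfl
    rw [h, ih, Finset.mul_sum]
    refine Finset.sum_congr rfl fun p _ => ?_
    rw [Finset.mul_sum]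
    refine Finset.sum_congr rfl fun j _ => ?_
    have h0 : (Fin.snocEquiv (fun _ : Fin (l + 2) => Fin n)) (i, p) 0 = p 0 := by
      exact Fin.snoc_castSucc (α := fun _ : Fin (l + 2) => Fin n) i p 0
    have hc : ∀ k : Fin (l + 1),
        (Fin.snocEquiv (fun _ : Fin (l + 2) => Fin n)) (i, p) k.castSucc = p k := fun k =>
      Fin.snoc_castSucc (α := fun _ : Fin (l + 2) => Fin n) i p k
    have hl : (Fin.snocEquiv (fun _ : Fin (l + 2) => Fin n)) (i, p) (Fin.last (l + 1)) = i :=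
      Fin.snoc_last (α := fun _ : Fin (l + 2) => Fin n) i p
    rw [Fin.prod_univ_castSucc, h0, hl, hc, Fin.succ_last, hl]
    simp only [Fin.succ_castSucc, hc, Fin.val_castSucc, Fin.val_last]
    ring

/-- The higher-layer weights along a path. -/
def edgeSet {m n : ℕ} (p : Fin (m + 1) → Fin n) : Finset (Fin m × Fin n × Fin n) :=
  (Finset.univ : Finset (Fin m)).image fun k => (k, p k.succ, p k.castSucc)

lemma path_inj {m n : ℕ} (p : Fin (m + 1) → Fin n) :
    Function.Injective fun k : Fin m => (k, p k.succ, p k.castSucc) :=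
  fun _ _ h => (Prod.ext_iff.1 h).1

lemma card_edgeSet {m n : ℕ} (p : Fin (m + 1) → Fin n) : (edgeSet p).card = m := by
  unfold edgeSet
  rw [Finset.card_image_of_injective _ (path_inj p)]
  simp

lemma prod_edgeSet {m n : ℕ} (p : Fin (m + 1) → Fin n) (f : Fin m × Fin n × Fin n → ℝ) :
    ∏ e ∈ edgeSet p, f e = ∏ k, f (k, p k.succ, p k.castSucc) := by
  unfold edgeSet
  rw [Finset.prod_image (fun _ _ _ _ h => path_inj p h)]

/-- The parameters along a path. -/
def pathSet (d0 m n : ℕ) (γ : (Fin (m + 1) → Fin n) × Fin d0) : Finset (Param d0 (m + 1) n) :=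
  ({γ.1 (Fin.last m)} : Finset (Fin n)).disjSum
    (({(γ.1 0, γ.2)} : Finset (Fin n × Fin d0)).disjSum (edgeSet γ.1))

lemma card_pathSet (d0 m n : ℕ) (γ : (Fin (m + 1) → Fin n) × Fin d0) :
    (pathSet d0 m n γ).card = m + 2 := by
  unfold pathSet
  have h := card_edgeSet γ.1
  rw [Finset.card_disjSum, Finset.card_disjSum, Finset.card_singleton, Finset.card_singleton]
  refine (congrArg (fun t => 1 + (1 + t)) h).trans ?_
  omega

lemma pathSet_injective (d0 m n : ℕ) : Function.Injective (pathSet d0 m n) := by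
  rintro ⟨p, j⟩ ⟨p', j'⟩ h
  simp only [pathSet, Finset.disjSum_inj, Finset.singleton_inj, Prod.mk.injEq] at h
  obtain ⟨-, ⟨h0, hj⟩, h2⟩ := h
  refine Prod.ext (funext fun k => ?_) hj
  refine Fin.cases h0 (fun k => ?_) k
  have h3 : edgeSet p = edgeSet p' := h2
  have : (k, p k.succ, p k.castSucc) ∈ edgeSet p' := by
    rw [← h3]
    exact Finset.mem_image_of_mem _ (Finset.mem_univ k)
  simp only [edgeSet, Finset.mem_image, Finset.mem_univ, true_and, Prod.mk.injEq] at this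
  obtain ⟨k', rfl, h, -⟩ := this
  exact h.symm

lemma net_expand (d0 m n : ℕ) (θ : Param d0 (m + 1) n → ℝ) (x : Fin d0 → ℝ) :
    net d0 (m + 1) n θ x = ∑ γ : (Fin (m + 1) → Fin n) × Fin d0,
      ((Real.sqrt ((n : ℝ) ^ (m + 1) * (d0 : ℝ)))⁻¹ * x γ.2) * ∏ p ∈ pathSet d0 m n γ, θ p := by
  unfold net
  have h := hidden_expand d0 (m + 1) n θ x m (fun i => θ (.inl i))
  simp only [Nat.add_sub_cancel] at h ⊢
  rw [h, Fintype.sum_prod_type, Finset.mul_sum]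
  refine Finset.sum_congr rfl fun p _ => ?_
  rw [Finset.mul_sum]
  refine Finset.sum_congr rfl fun j _ => ?_
  unfold pathSet
  rw [Finset.prod_disjSum, Finset.prod_disjSum, Finset.prod_singleton, Finset.prod_singleton]
  have he := prod_edgeSet p (fun e => θ (.inr (.inr e)))
  have hw : ∏ k : Fin m, wt d0 (m + 1) n θ k (p k.succ) (p k.castSucc)
      = ∏ k : Fin m, θ (.inr (.inr (k, p k.succ, p k.castSucc))) := by
    refine Finset.prod_congr rfl fun k _ => ?_
    unfold wt
    rw [dif_pos (show (k : ℕ) < m + 1 - 1 from k.2)]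
    rfl
  rw [hw, ← he]
  simp only [mul_assoc]
  rfl

/-- for a deep linear fully connected network of depth `d` and width `n`,
`E_θ[Θ(x,x')] = (d+1) ⟨x, x'⟩ / d0`, independent of `n`. -/
theorem deep_linear_fc_ntk_mean (d0 d : ℕ) (hd0 : 0 < d0) (hd : 1 ≤ d)
    (x x' : Fin d0 → ℝ) (n : ℕ) (hn : 1 ≤ n) :
    ∫ θ, NTK d0 d n θ x x' ∂(gaussParam d0 d n)
      = ((d : ℝ) + 1) * (∑ j : Fin d0, x j * x' j) / (d0 : ℝ) := by
  obtain ⟨m, rfl⟩ : ∃ m, d = m + 1 := ⟨d - 1, by omega⟩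
  unfold NTK gaussParam
  simp_rw [net_expand]
  rw [integral_ntk_poly (pathSet d0 m n) (pathSet_injective d0 m n) (m + 2) (card_pathSet d0 m n)]
  have hn' : (0 : ℝ) < (n : ℝ) := by exact_mod_cast hn
  have hd0' : (0 : ℝ) < (d0 : ℝ) := by exact_mod_cast hd0
  have hpos : (0 : ℝ) < (n : ℝ) ^ (m + 1) * (d0 : ℝ) := by positivity
  have hs := Real.mul_self_sqrt hpos.le
  have hc : ∀ u v : ℝ, (Real.sqrt ((n : ℝ) ^ (m + 1) * (d0 : ℝ)))⁻¹ * u *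
      ((Real.sqrt ((n : ℝ) ^ (m + 1) * (d0 : ℝ)))⁻¹ * v)
      = ((n : ℝ) ^ (m + 1) * (d0 : ℝ))⁻¹ * (u * v) := by
    intro u v
    rw [mul_mul_mul_comm, ← mul_inv, hs]
  simp_rw [hc]
  rw [← Finset.mul_sum, Fintype.sum_prod_type]
  simp only [Finset.sum_const, Finset.card_univ, Fintype.card_fun, Fintype.card_fin, nsmul_eq_mul]
  push_cast
  field_simp
  ring

end DeepLinearFC
end

section
/- Let f be a deep linear fully connected network of depth d and width n, and let Θ be its neural tangent kernel. Then for all fixed inputs x, x' ∈ ℝ^{d_0} there exists a constant K (depending on d, d_0, x, x' but not on n) such that Var_θ[Θ(x,x')] = E_θ[Θ(x,x')^2] − (E_θ[Θ(x,x')])^2 ≤ K / n for all n ≥ 1. -/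
open MeasureTheory ProbabilityTheory

namespace DeepLinearFC

lemma gauss_moments (v : NNReal) :
    (∫ x, x ^ 2 ∂(gaussianReal 0 v) = v) ∧ (∫ x, x ^ 4 ∂(gaussianReal 0 v) = 3 * (v:ℝ)^2) := by
  have h0 : (0:ℝ) ∈ interior (integrableExpSet id (gaussianReal 0 v)) := by
    rw [integrableExpSet_id_gaussianReal]; simp
  have h2 := iteratedDeriv_mgf_zero h0 2
  have h4 := iteratedDeriv_mgf_zero h0 4
  rw [mgf_id_gaussianReal] at h2 h4
  have e : (fun t : ℝ => Real.exp (0 * t + v * t ^ 2 / 2)) = fun t => Real.exp (v * t ^ 2 / 2) := by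
    ext; simp
  rw [e] at h2 h4
  have hE : ∀ t : ℝ, HasDerivAt (fun t : ℝ => Real.exp (v * t ^ 2 / 2))
      (v * t * Real.exp (v * t ^ 2 / 2)) t := by
    intro t
    have := ((hasDerivAt_pow 2 t).const_mul (v:ℝ)).div_const 2 |>.exp
    convert this using 1
    simp; ring
  have d1 : deriv (fun t : ℝ => Real.exp (v * t ^ 2 / 2)) =
      fun t => v * t * Real.exp (v * t ^ 2 / 2) := by
    ext t; exact (hE t).deriv
  have hl : ∀ (c t : ℝ) (k : ℕ), HasDerivAt (fun t : ℝ => c * t ^ k) (c * (k * t ^ (k-1))) t := by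
    intro c t k
    exact (hasDerivAt_pow k t).const_mul c
  have d2 : deriv (fun t : ℝ => v * t * Real.exp (v * t ^ 2 / 2)) =
      fun t => (v + v^2 * t^2) * Real.exp (v * t ^ 2 / 2) := by
    ext t
    have := ((hasDerivAt_id t).const_mul (v:ℝ)).mul (hE t)
    refine (this.congr_deriv ?_).deriv
    simp; ring
  have d3 : deriv (fun t : ℝ => (v + v^2 * t^2) * Real.exp (v * t ^ 2 / 2)) =
      fun t => (3 * v^2 * t ^ 1 + v^3 * t^3) * Real.exp (v * t ^ 2 / 2) := by
    ext t
    have := ((hl (v^2) t 2).const_add (v:ℝ)).mul (hE t)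
    refine (this.congr_deriv ?_).deriv
    simp; ring
  have d4 : deriv (fun t : ℝ => (3 * v^2 * t^1 + v^3 * t^3) * Real.exp (v * t ^ 2 / 2)) =
      fun t => (3 * v^2 + 6 * v^3 * t^2 + v^4 * t^4) * Real.exp (v * t ^ 2 / 2) := by
    ext t
    have := ((hl (3*v^2) t 1).add (hl (v^3) t 3)).mul (hE t)
    refine (this.congr_deriv ?_).deriv
    simp; ring
  simp only [iteratedDeriv_succ, iteratedDeriv_zero, d1, d2, d3, d4] at h2 h4
  simp at h2 h4
  exact ⟨h2.symm, h4.symm⟩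

section
variable {ι : Type*} [Fintype ι]

lemma lin_law (a : ι → ℝ) :
    (Measure.pi fun _ : ι => gaussianReal 0 1).map (fun y => ∑ μ, a μ * y μ) =
      gaussianReal 0 (∑ μ, a μ ^ 2).toNNReal := by
  have hm : Measurable (fun y : ι → ℝ => ∑ μ, a μ * y μ) := by fun_prop
  have : IsProbabilityMeasure ((Measure.pi fun _ : ι => gaussianReal 0 1).map (fun y => ∑ μ, a μ * y μ)) :=
    Measure.isProbabilityMeasure_map hm.aemeasurable
  apply Measure.ext_of_charFun
  ext t
  rw [charFun_gaussianReal, charFun_apply_real, integral_map hm.aemeasurable (by fun_prop)]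
  have : ∀ y : ι → ℝ, Complex.exp (t * ((∑ μ, a μ * y μ : ℝ) : ℂ) * Complex.I) =
      ∏ μ, Complex.exp (((t * a μ : ℝ) : ℂ) * (y μ : ℂ) * Complex.I) := by
    intro y
    rw [← Complex.exp_sum]
    push_cast
    rw [Finset.mul_sum, Finset.sum_mul]
    congr 1
    refine Finset.sum_congr rfl fun _ _ => by ring
  simp_rw [this]
  rw [integral_fintype_prod_eq_prod (fun μ (y : ℝ) => Complex.exp (((t * a μ : ℝ) : ℂ) * (y : ℂ) * Complex.I))]
  simp_rw [← charFun_apply_real, charFun_gaussianReal]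
  rw [← Complex.exp_sum]
  congr 1
  have h0 : 0 ≤ ∑ μ, a μ ^ 2 := Finset.sum_nonneg fun _ _ => sq_nonneg _
  simp [Real.coe_toNNReal _ h0, Finset.sum_mul, Finset.sum_div]
  refine Finset.sum_congr rfl fun _ _ => by ring

lemma lin_moments (a : ι → ℝ) :
    (∀ k : ℕ, Integrable (fun y : ι → ℝ => (∑ μ, a μ * y μ) ^ k) (Measure.pi fun _ => gaussianReal 0 1)) ∧
    (∫ y, (∑ μ, a μ * y μ) ^ 2 ∂(Measure.pi fun _ : ι => gaussianReal 0 1) = ∑ μ, a μ ^ 2) ∧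
    (∫ y, (∑ μ, a μ * y μ) ^ 4 ∂(Measure.pi fun _ : ι => gaussianReal 0 1) = 3 * (∑ μ, a μ ^ 2)^2) := by
  have hm : Measurable (fun y : ι → ℝ => ∑ μ, a μ * y μ) := by fun_prop
  have h0 : 0 ≤ ∑ μ, a μ ^ 2 := Finset.sum_nonneg fun _ _ => sq_nonneg _
  have key := lin_law a
  obtain ⟨g2, g4⟩ := gauss_moments (∑ μ, a μ ^ 2).toNNReal
  rw [← key, integral_map hm.aemeasurable (by fun_prop), Real.coe_toNNReal _ h0] at g2 g4
  refine ⟨fun k => ?_, g2, g4⟩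
  have := (memLp_id_gaussianReal' (μ := 0) (v := (∑ μ, a μ ^ 2).toNNReal) k (by simp)).integrable_norm_pow'
  rw [← key] at this
  have h2 := this.comp_measurable hm
  refine (h2.mono' (hm.pow_const k).aestronglyMeasurable ?_)
  filter_upwards with y
  simp

lemma lin_moments22 (a b : ι → ℝ) :
    (Integrable (fun y : ι → ℝ => (∑ μ, a μ * y μ) ^ 2 * (∑ μ, b μ * y μ) ^ 2) (Measure.pi fun _ => gaussianReal 0 1)) ∧
    (∫ y, (∑ μ, a μ * y μ) ^ 2 * (∑ μ, b μ * y μ) ^ 2 ∂(Measure.pi fun _ : ι => gaussianReal 0 1)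
      = (∑ μ, a μ ^ 2) * (∑ μ, b μ ^ 2) + 2 * (∑ μ, a μ * b μ) ^ 2) := by
  have e : ∀ y : ι → ℝ, (∑ μ, a μ * y μ) ^ 2 * (∑ μ, b μ * y μ) ^ 2 =
      (1/12) * (((∑ μ, (a + b) μ * y μ) ^ 4 + (∑ μ, (a - b) μ * y μ) ^ 4) -
        (2 * (∑ μ, a μ * y μ) ^ 4 + 2 * (∑ μ, b μ * y μ) ^ 4)) := by
    intro y
    have h1 : ∑ μ, (a + b) μ * y μ = ∑ μ, a μ * y μ + ∑ μ, b μ * y μ := by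
      simp [add_mul, Finset.sum_add_distrib]
    have h2 : ∑ μ, (a - b) μ * y μ = ∑ μ, a μ * y μ - ∑ μ, b μ * y μ := by
      simp [sub_mul, Finset.sum_sub_distrib]
    rw [h1, h2]; ring
  obtain ⟨ia, -, fa⟩ := lin_moments a
  obtain ⟨ib, -, fb⟩ := lin_moments b
  obtain ⟨ic, -, fc⟩ := lin_moments (a + b)
  obtain ⟨id, -, fd⟩ := lin_moments (a - b)
  have i1 : Integrable (fun y : ι → ℝ => (∑ μ, (a + b) μ * y μ) ^ 4 + (∑ μ, (a - b) μ * y μ) ^ 4)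
      (Measure.pi fun _ => gaussianReal 0 1) := (ic 4).add (id 4)
  have i2 : Integrable (fun y : ι → ℝ => 2 * (∑ μ, a μ * y μ) ^ 4 + 2 * (∑ μ, b μ * y μ) ^ 4)
      (Measure.pi fun _ => gaussianReal 0 1) := ((ia 4).const_mul 2).add ((ib 4).const_mul 2)
  simp_rw [e]
  refine ⟨(i1.sub i2).const_mul _, ?_⟩
  rw [integral_const_mul, integral_sub i1 i2, integral_add (ic 4) (id 4),
    integral_add ((ia 4).const_mul 2) ((ib 4).const_mul 2), integral_const_mul, integral_const_mul,
    fa, fb, fc, fd]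
  have h1 : ∑ μ, (a + b) μ ^ 2 = ∑ μ, a μ ^ 2 + ∑ μ, b μ ^ 2 + 2 * ∑ μ, a μ * b μ := by
    rw [Finset.mul_sum, ← Finset.sum_add_distrib, ← Finset.sum_add_distrib]
    refine Finset.sum_congr rfl fun _ _ => by simp; ring
  have h2 : ∑ μ, (a - b) μ ^ 2 = ∑ μ, a μ ^ 2 + ∑ μ, b μ ^ 2 - 2 * ∑ μ, a μ * b μ := by
    rw [Finset.mul_sum, ← Finset.sum_add_distrib, ← Finset.sum_sub_distrib]
    refine Finset.sum_congr rfl fun _ _ => by simp; ring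
  rw [h1, h2]; ring

lemma row_dot [DecidableEq ι] {I J : Type*} [Fintype I] [Fintype J] (e : I × J → ι)
    (p : J → ℝ) (i : I) (y : ι → ℝ) :
    ∑ μ, (∑ j, if e (i, j) = μ then p j else 0) * y μ = ∑ j, y (e (i, j)) * p j := by
  simp_rw [Finset.sum_mul]
  rw [Finset.sum_comm]
  simp [mul_comm]

/-- Constants in the moment recursion. -/
noncomputable def momC (s n : ℕ) : ℝ := if s = 1 then n else n * (n + 2)

lemma mat_moments {I J : Type*} [Fintype I] [Fintype J] (e : I × J → ι)
    (he : Function.Injective e) (p : J → ℝ) (s : ℕ) (hs : s = 1 ∨ s = 2) :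
    ∫⁻ y, ENNReal.ofReal ((∑ i, (∑ j, y (e (i, j)) * p j) ^ 2) ^ s)
      ∂(Measure.pi fun _ : ι => gaussianReal 0 1) =
      ENNReal.ofReal (momC s (Fintype.card I)) * ENNReal.ofReal ((∑ j, p j ^ 2) ^ s) := by
  classical
  set a : I → ι → ℝ := fun i μ => ∑ j, if e (i, j) = μ then p j else 0 with ha
  have hdot : ∀ (i : I) (y : ι → ℝ), ∑ j, y (e (i, j)) * p j = ∑ μ, a i μ * y μ := fun i y =>
    (row_dot e p i y).symm
  have hae : ∀ k i j, a k (e (i, j)) = if i = k then p j else 0 := by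
    intro k i j
    simp only [ha, he.eq_iff, Prod.mk.injEq]
    by_cases h : i = k
    · simp [h]
    · simp [h, Ne.symm h]
  have hin : ∀ i k, ∑ μ, a i μ * a k μ = if i = k then ∑ j, p j ^ 2 else 0 := by
    intro i k
    rw [← hdot]
    simp only [hae]
    split_ifs with h
    · exact Finset.sum_congr rfl fun _ _ => by ring
    · simp
  have hsq : ∀ i, ∑ μ, a i μ ^ 2 = ∑ j, p j ^ 2 := by
    intro i
    have := hin i i
    simp only [if_true] at this
    rw [← this]
    exact Finset.sum_congr rfl fun _ _ => by ring
  simp_rw [hdot]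
  have hC : 0 ≤ momC s (Fintype.card I) := by
    unfold momC; split_ifs <;> positivity
  rw [← ENNReal.ofReal_mul hC]
  rcases hs with rfl | rfl
  · have hi : ∀ i ∈ Finset.univ, Integrable (fun y : ι → ℝ => (∑ μ, a i μ * y μ) ^ 2)
        (Measure.pi fun _ => gaussianReal 0 1) := fun i _ => (lin_moments (a i)).1 2
    simp only [pow_one]
    rw [← ofReal_integral_eq_lintegral_ofReal (integrable_finsetSum _ hi)
      (Filter.Eventually.of_forall fun y => Finset.sum_nonneg fun _ _ => sq_nonneg _),
      integral_finsetSum _ hi]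
    simp [fun i => (lin_moments (a i)).2.1, hsq, momC]
  · have hi : ∀ i ∈ Finset.univ, ∀ k ∈ Finset.univ,
        Integrable (fun y : ι → ℝ => (∑ μ, a i μ * y μ) ^ 2 * (∑ μ, a k μ * y μ) ^ 2)
        (Measure.pi fun _ => gaussianReal 0 1) := fun i _ k _ => (lin_moments22 (a i) (a k)).1
    have e2 : ∀ y : ι → ℝ, (∑ i, (∑ μ, a i μ * y μ) ^ 2) ^ 2 =
        ∑ i, ∑ k, (∑ μ, a i μ * y μ) ^ 2 * (∑ μ, a k μ * y μ) ^ 2 := by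
      intro y
      rw [sq, Finset.sum_mul_sum]
    simp_rw [e2]
    rw [← ofReal_integral_eq_lintegral_ofReal
      (integrable_finsetSum _ fun i hi' => integrable_finsetSum _ (hi i hi'))
      (Filter.Eventually.of_forall fun y => Finset.sum_nonneg fun _ _ =>
        Finset.sum_nonneg fun _ _ => mul_nonneg (sq_nonneg _) (sq_nonneg _)),
      integral_finsetSum _ fun i hi' => integrable_finsetSum _ (hi i hi')]
    congr 1
    have : ∀ i, ∫ y, ∑ k, (∑ μ, a i μ * y μ) ^ 2 * (∑ μ, a k μ * y μ) ^ 2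
        ∂(Measure.pi fun _ : ι => gaussianReal 0 1) =
        ((Fintype.card I : ℝ) + 2) * (∑ j, p j ^ 2) ^ 2 := by
      intro i
      rw [integral_finsetSum _ (hi i (Finset.mem_univ _))]
      simp_rw [fun k => (lin_moments22 (a i) (a k)).2, hsq, hin]
      rw [Finset.sum_add_distrib]
      simp
      ring
    simp_rw [this]
    simp [momC]
    ring

lemma resample (S : Set ι) [DecidablePred (· ∈ S)] :
    MeasurePreserving (fun (z : (ι → ℝ) × (ι → ℝ)) μ => if μ ∈ S then z.2 μ else z.1 μ)
      ((Measure.pi fun _ : ι => gaussianReal 0 1).prod (Measure.pi fun _ : ι => gaussianReal 0 1))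
      (Measure.pi fun _ : ι => gaussianReal 0 1) := by
  have h1 := (measurePreserving_arrowProdEquivProdArrow ℝ ℝ ι (fun _ => gaussianReal 0 1)
    (fun _ => gaussianReal 0 1)).symm
  have h2 : MeasurePreserving (fun (w : ι → ℝ × ℝ) μ => if μ ∈ S then (w μ).2 else (w μ).1)
      (Measure.pi fun _ : ι => (gaussianReal 0 1).prod (gaussianReal 0 1))
      (Measure.pi fun _ : ι => gaussianReal 0 1) := by
    refine measurePreserving_pi (f := fun μ (w : ℝ × ℝ) => if μ ∈ S then w.2 else w.1) _ _ fun μ => ?_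
    by_cases h : μ ∈ S
    · simpa [h] using measurePreserving_snd
    · simpa [h] using measurePreserving_fst
  exact h2.comp h1

lemma step {I J : Type*} [Fintype I] [Fintype J] (e : I × J → ι)
    (he : Function.Injective e) (s : ℕ) (hs : s = 1 ∨ s = 2)
    (A : (ι → ℝ) → ENNReal) (hA : Measurable A) (p : (ι → ℝ) → J → ℝ) (hp : Measurable p)
    (hAi : ∀ θ θ' : ι → ℝ, (∀ μ ∉ Set.range e, θ μ = θ' μ) → A θ = A θ')
    (hpi : ∀ θ θ' : ι → ℝ, (∀ μ ∉ Set.range e, θ μ = θ' μ) → p θ = p θ') :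
    ∫⁻ θ, A θ * ENNReal.ofReal ((∑ i, (∑ j, θ (e (i, j)) * p θ j) ^ 2) ^ s)
      ∂(Measure.pi fun _ : ι => gaussianReal 0 1) =
      ENNReal.ofReal (momC s (Fintype.card I)) *
      ∫⁻ θ, A θ * ENNReal.ofReal ((∑ j, p θ j ^ 2) ^ s)
      ∂(Measure.pi fun _ : ι => gaussianReal 0 1) := by
  classical
  have hp' : ∀ j, Measurable (fun θ => p θ j) := fun j => (measurable_pi_apply j).comp hp
  have hF : Measurable fun θ : ι → ℝ =>
      A θ * ENNReal.ofReal ((∑ i, (∑ j, θ (e (i, j)) * p θ j) ^ 2) ^ s) := by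
    fun_prop
  have R := resample (Set.range e)
  rw [← R.lintegral_comp hF, lintegral_prod _ (by exact (hF.comp R.measurable).aemeasurable),
    ← lintegral_const_mul _ (by fun_prop)]
  refine lintegral_congr fun θ => ?_
  have hpt : ∀ y : ι → ℝ, (∀ μ ∉ Set.range e, (if μ ∈ Set.range e then y μ else θ μ) = θ μ) := by
    intro y μ hμ; simp only [hμ, if_false]
  simp_rw [fun y : ι → ℝ => hAi (fun μ => if μ ∈ Set.range e then y μ else θ μ) θ (hpt y),
    fun y : ι → ℝ => hpi (fun μ => if μ ∈ Set.range e then y μ else θ μ) θ (hpt y),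
    Set.mem_range_self, if_true]
  rw [lintegral_const_mul _ (by fun_prop), mat_moments e he (p θ) s hs]
  ring

end

/-- Weight matrix of the higher layers. -/
def Wt (d0 d n : ℕ) (θ : Param d0 d n → ℝ) (l : ℕ) (i j : Fin n) : ℝ :=
  if h : l < d - 1 then θ (.inr (.inr (⟨l, h⟩, i, j))) else 0

/-- Backward vectors. -/
def back (d0 d n : ℕ) (θ : Param d0 d n → ℝ) : ℕ → Fin n → ℝ
  | 0 => fun i => θ (.inl i)
  | r + 1 => fun j => ∑ i : Fin n, Wt d0 d n θ (d - 1 - (r + 1)) i j * back d0 d n θ r i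

section net
variable {d0 d n : ℕ}

lemma hidden_succ (θ : Param d0 d n → ℝ) (x : Fin d0 → ℝ) (k : ℕ) (i : Fin n) :
    hidden d0 d n θ x (k + 1) i = ∑ j, Wt d0 d n θ k i j * hidden d0 d n θ x k j := rfl

lemma hidden_congr (θ θ' : Param d0 d n → ℝ) (x : Fin d0 → ℝ) (k : ℕ)
    (h1 : ∀ i j, θ (.inr (.inl (i, j))) = θ' (.inr (.inl (i, j))))
    (h2 : ∀ l : Fin (d - 1), l.1 < k → ∀ i j, θ (.inr (.inr (l, i, j))) = θ' (.inr (.inr (l, i, j)))) :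
    hidden d0 d n θ x k = hidden d0 d n θ' x k := by
  induction k with
  | zero => ext i; simp [hidden, h1]
  | succ k ih =>
    ext i
    rw [hidden_succ, hidden_succ, ih fun l hl => h2 l (by omega)]
    refine Finset.sum_congr rfl fun j _ => ?_
    congr 1
    unfold Wt
    split_ifs with h
    · exact h2 ⟨k, h⟩ (by simp) i j
    · rfl

lemma back_congr (θ θ' : Param d0 d n → ℝ) (r : ℕ)
    (h1 : ∀ i, θ (.inl i) = θ' (.inl i))
    (h2 : ∀ l : Fin (d - 1), d - 1 - r ≤ l.1 → ∀ i j,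
      θ (.inr (.inr (l, i, j))) = θ' (.inr (.inr (l, i, j)))) :
    back d0 d n θ r = back d0 d n θ' r := by
  induction r with
  | zero => ext i; simp [back, h1]
  | succ r ih =>
    ext j
    simp only [back]
    rw [ih fun l hl => h2 l (by omega)]
    refine Finset.sum_congr rfl fun i _ => ?_
    congr 1
    unfold Wt
    split_ifs with h
    · exact h2 ⟨_, h⟩ (by simp) i j
    · rfl

lemma pairing (θ : Param d0 d n → ℝ) (x : Fin d0 → ℝ) (r : ℕ) (hr : r ≤ d - 1) :
    ∑ i, θ (.inl i) * hidden d0 d n θ x (d - 1) i =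
      ∑ i, back d0 d n θ r i * hidden d0 d n θ x (d - 1 - r) i := by
  induction r with
  | zero => simp [back]
  | succ r ih =>
    rw [ih (by omega)]
    have : d - 1 - r = (d - 1 - (r + 1)) + 1 := by omega
    rw [this]
    simp only [back, hidden_succ]
    simp_rw [Finset.mul_sum, Finset.sum_mul]
    rw [Finset.sum_comm]
    refine Finset.sum_congr rfl fun j _ => Finset.sum_congr rfl fun i _ => by ring

lemma hidden_diff (x : Fin d0 → ℝ) (k : ℕ) (i : Fin n) :
    Differentiable ℝ (fun θ : Param d0 d n → ℝ => hidden d0 d n θ x k i) := by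
  induction k generalizing i with
  | zero => simp only [hidden]; fun_prop
  | succ k ih =>
    simp only [hidden_succ, Wt]
    refine Differentiable.fun_sum fun j _ => Differentiable.mul ?_ (ih j)
    split_ifs <;> fun_prop

lemma back_diff (r : ℕ) (i : Fin n) :
    Differentiable ℝ (fun θ : Param d0 d n → ℝ => back d0 d n θ r i) := by
  induction r generalizing i with
  | zero => simp only [back]; fun_prop
  | succ k ih =>
    simp only [back, Wt]
    refine Differentiable.fun_sum fun j _ => Differentiable.mul ?_ (ih j)
    split_ifs <;> fun_prop

lemma hidden_meas (x : Fin d0 → ℝ) (k : ℕ) :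
    Measurable (fun θ : Param d0 d n → ℝ => hidden d0 d n θ x k) :=
  measurable_pi_lambda _ fun i => (hidden_diff x k i).continuous.measurable

lemma back_meas (r : ℕ) :
    Measurable (fun θ : Param d0 d n → ℝ => back d0 d n θ r) :=
  measurable_pi_lambda _ fun i => (back_diff r i).continuous.measurable

lemma net_diff (x : Fin d0 → ℝ) :
    Differentiable ℝ (fun θ : Param d0 d n → ℝ => net d0 d n θ x) := by
  unfold net
  refine Differentiable.const_mul (Differentiable.fun_sum fun j _ => ?_) _
  exact Differentiable.mul (by fun_prop) (hidden_diff x _ j)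

lemma fderiv_of_affine {E : Type*} [NormedAddCommGroup E] [NormedSpace ℝ E] (f : E → ℝ)
    (hf : Differentiable ℝ f) (θ v : E) (g : ℝ) (h : ∀ t : ℝ, f (θ + t • v) = f θ + t * g) :
    fderiv ℝ f θ v = g := by
  rw [← (hf θ).lineDeriv_eq_fderiv]
  unfold lineDeriv
  simp_rw [h]
  simp

lemma grad_v (θ : Param d0 d n → ℝ) (x : Fin d0 → ℝ) (i : Fin n) :
    fderiv ℝ (fun θ' => net d0 d n θ' x) θ (Pi.single (.inl i) 1) =
      (Real.sqrt ((n : ℝ) ^ d * (d0 : ℝ)))⁻¹ * hidden d0 d n θ x (d - 1) i := by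
  refine fderiv_of_affine _ (net_diff x) _ _ _ fun t => ?_
  unfold net
  rw [hidden_congr (θ + t • Pi.single (Sum.inl i) 1) θ x (d - 1) (by simp) (by simp)]
  simp [add_mul, Finset.sum_add_distrib, Pi.single_apply, mul_add]
  ring

lemma grad_w (θ : Param d0 d n → ℝ) (x : Fin d0 → ℝ) (i : Fin n) (j : Fin d0) :
    fderiv ℝ (fun θ' => net d0 d n θ' x) θ (Pi.single (.inr (.inl (i, j))) 1) =
      (Real.sqrt ((n : ℝ) ^ d * (d0 : ℝ)))⁻¹ * (back d0 d n θ (d - 1) i * x j) := by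
  refine fderiv_of_affine _ (net_diff x) _ _ _ fun t => ?_
  unfold net
  rw [pairing _ x (d - 1) le_rfl, pairing θ x (d - 1) le_rfl,
    back_congr (θ + t • Pi.single (Sum.inr (Sum.inl (i, j))) 1) θ (d - 1) (by simp) (by simp)]
  have : ∀ i', hidden d0 d n (θ + t • Pi.single (Sum.inr (Sum.inl (i, j))) 1) x 0 i' =
      hidden d0 d n θ x 0 i' + t * (if i' = i then x j else 0) := by
    intro i'
    by_cases h : i' = i
    · simp [hidden, add_mul, Finset.sum_add_distrib, Pi.single_apply, h]
    · simp [hidden, add_mul, Finset.sum_add_distrib, Pi.single_apply, h]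
  simp [this, mul_add, Finset.sum_add_distrib]
  ring

lemma grad_W (θ : Param d0 d n → ℝ) (x : Fin d0 → ℝ) (k : Fin (d - 1)) (i j : Fin n) :
    fderiv ℝ (fun θ' => net d0 d n θ' x) θ (Pi.single (.inr (.inr (k, i, j))) 1) =
      (Real.sqrt ((n : ℝ) ^ d * (d0 : ℝ)))⁻¹ *
        (back d0 d n θ (d - 1 - (k + 1)) i * hidden d0 d n θ x k j) := by
  refine fderiv_of_affine _ (net_diff x) _ _ _ fun t => ?_
  unfold net
  have hk := k.2
  rw [pairing _ x (d - 1 - (k + 1)) (by omega), pairing θ x (d - 1 - (k + 1)) (by omega),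
    back_congr (θ + t • Pi.single (Sum.inr (Sum.inr (k, i, j))) 1) θ (d - 1 - (k + 1)) (by simp)
      (by
        intro l hl i' j'
        have : l ≠ k := by rintro rfl; omega
        simp [Pi.single_apply, this])]
  have e : d - 1 - (d - 1 - (k + 1)) = k + 1 := by omega
  rw [e]
  have hh : hidden d0 d n (θ + t • Pi.single (Sum.inr (Sum.inr (k, i, j))) 1) x k =
      hidden d0 d n θ x k := by
    refine hidden_congr _ _ _ _ (by simp) ?_
    intro l hl i' j'
    have : l ≠ k := by rintro rfl; omega
    simp [Pi.single_apply, this]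
  have : ∀ i', hidden d0 d n (θ + t • Pi.single (Sum.inr (Sum.inr (k, i, j))) 1) x (k + 1) i' =
      hidden d0 d n θ x (k + 1) i' + t * (if i' = i then hidden d0 d n θ x k j else 0) := by
    intro i'
    rw [hidden_succ, hidden_succ, hh]
    by_cases h : i' = i
    · simp [Wt, add_mul, Finset.sum_add_distrib, Pi.single_apply, h]
    · simp [Wt, add_mul, Finset.sum_add_distrib, Pi.single_apply, h]
  simp only [this, mul_add, Finset.sum_add_distrib]
  simp
  ring

lemma hidden_add (θ : Param d0 d n → ℝ) (x x' : Fin d0 → ℝ) (k : ℕ) (i : Fin n) :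
    hidden d0 d n θ (x + x') k i = hidden d0 d n θ x k i + hidden d0 d n θ x' k i := by
  induction k generalizing i with
  | zero => simp [hidden, mul_add, Finset.sum_add_distrib]
  | succ k ih => simp [hidden_succ, ih, mul_add, Finset.sum_add_distrib]

lemma hidden_sub (θ : Param d0 d n → ℝ) (x x' : Fin d0 → ℝ) (k : ℕ) (i : Fin n) :
    hidden d0 d n θ (x - x') k i = hidden d0 d n θ x k i - hidden d0 d n θ x' k i := by
  induction k generalizing i with
  | zero => simp [hidden, mul_sub, Finset.sum_sub_distrib]
  | succ k ih => simp [hidden_succ, ih, mul_sub, Finset.sum_sub_distrib]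

/-- The layerwise diagonal terms of the kernel. -/
def T (d0 d n : ℕ) (x : Fin d0 → ℝ) (θ : Param d0 d n → ℝ) : Unit ⊕ Unit ⊕ Fin (d - 1) → ℝ
  | .inl _ => ∑ i, hidden d0 d n θ x (d - 1) i ^ 2
  | .inr (.inl _) => (∑ i, back d0 d n θ (d - 1) i ^ 2) * ∑ j, x j ^ 2
  | .inr (.inr k) => (∑ i, back d0 d n θ (d - 1 - (k + 1)) i ^ 2) * ∑ j, hidden d0 d n θ x k j ^ 2

lemma polar {J : Type*} [Fintype J] (p q : J → ℝ) :
    ∑ j, p j * q j = (1/4) * (∑ j, (p j + q j) ^ 2 - ∑ j, (p j - q j) ^ 2) := by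
  rw [← Finset.sum_sub_distrib, Finset.mul_sum]
  exact Finset.sum_congr rfl fun _ _ => by ring

lemma NTK_eq (θ : Param d0 d n → ℝ) (x x' : Fin d0 → ℝ) :
    NTK d0 d n θ x x' = ((n : ℝ) ^ d * (d0 : ℝ))⁻¹ *
      ∑ τ, (1/4) * (T d0 d n (x + x') θ τ - T d0 d n (x - x') θ τ) := by
  have hc : ((n : ℝ) ^ d * (d0 : ℝ))⁻¹ = (Real.sqrt ((n : ℝ) ^ d * (d0 : ℝ)))⁻¹ *
      (Real.sqrt ((n : ℝ) ^ d * (d0 : ℝ)))⁻¹ := by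
    rw [← mul_inv, Real.mul_self_sqrt (by positivity)]
  rw [hc]
  generalize hcc : (Real.sqrt ((n : ℝ) ^ d * (d0 : ℝ)))⁻¹ = c
  unfold NTK
  simp only [Fintype.sum_sum_type, grad_v, grad_w, grad_W, hcc, Fintype.sum_prod_type, T,
    Finset.univ_unique, Finset.sum_singleton, hidden_add, hidden_sub, Pi.add_apply, Pi.sub_apply]
  have pf : ∀ {J : Type} [Fintype J] (b : Fin n → ℝ) (p q : J → ℝ),
      ∑ i, ∑ j, c * (b i * p j) * (c * (b i * q j)) =
      c * c * ((1/4) * ((∑ i, b i ^ 2) * ∑ j, (p j + q j) ^ 2 -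
        (∑ i, b i ^ 2) * ∑ j, (p j - q j) ^ 2)) := by
    intro J _ b p q
    have := polar p q
    rw [← mul_sub, mul_left_comm (1/4 : ℝ), ← this, Finset.sum_mul_sum, Finset.mul_sum]
    refine Finset.sum_congr rfl fun i _ => ?_
    rw [Finset.mul_sum]
    exact Finset.sum_congr rfl fun _ _ => by ring
  have pv : ∀ (p q : Fin n → ℝ), ∑ i, c * p i * (c * q i) =
      c * c * ((1/4) * (∑ i, (p i + q i) ^ 2 - ∑ i, (p i - q i) ^ 2)) := by
    intro p q
    rw [← polar, Finset.mul_sum]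
    exact Finset.sum_congr rfl fun _ _ => by ring
  rw [pv, pf]
  simp_rw [pf]
  rw [mul_add, mul_add]
  congr 2
  rw [Finset.mul_sum]

lemma hid_moment (s : ℕ) (hs : s = 1 ∨ s = 2) (x : Fin d0 → ℝ)
    (A : (Param d0 d n → ℝ) → ENNReal) (hA : Measurable A) (k : ℕ) (hk : k ≤ d - 1)
    (hAi : ∀ θ θ' : Param d0 d n → ℝ, (∀ i, θ (.inl i) = θ' (.inl i)) →
      (∀ l : Fin (d - 1), k ≤ l.1 → ∀ i j,
        θ (.inr (.inr (l, i, j))) = θ' (.inr (.inr (l, i, j)))) → A θ = A θ') :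
    ∫⁻ θ, A θ * ENNReal.ofReal ((∑ i, hidden d0 d n θ x k i ^ 2) ^ s) ∂(gaussParam d0 d n) =
      ENNReal.ofReal (momC s n) ^ (k + 1) *
        ((∫⁻ θ, A θ ∂(gaussParam d0 d n)) * ENNReal.ofReal ((∑ j, x j ^ 2) ^ s)) := by
  induction k with
  | zero =>
    have := step (ι := Param d0 d n) (fun ij : Fin n × Fin d0 => .inr (.inl ij))
      (fun a b h => by simpa using h) s hs A hA (fun _ => x) measurable_const
      (fun θ θ' h => hAi θ θ' (fun i => h _ (by simp)) fun l _ i j => h _ (by simp))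
      (fun _ _ _ => rfl)
    simp only [hidden, gaussParam]
    rw [this, lintegral_mul_const _ hA]
    simp
  | succ k ih =>
    have hk' : k < d - 1 := hk
    have := step (ι := Param d0 d n) (fun ij : Fin n × Fin n => .inr (.inr (⟨k, hk'⟩, ij)))
      (fun a b h => by simpa using h) s hs A hA (fun θ => hidden d0 d n θ x k) (hidden_meas x k)
      (fun θ θ' h => hAi θ θ' (fun i => h _ (by simp)) fun l hl i j => h _ (by
        have : (⟨k, hk'⟩ : Fin (d - 1)) ≠ l := by rintro rfl; simp at hl
        simp [this]))
      (fun θ θ' h => hidden_congr θ θ' x k (fun i j => h _ (by simp)) fun l hl i j => h _ (by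
        have : (⟨k, hk'⟩ : Fin (d - 1)) ≠ l := by rintro rfl; simp at hl
        simp [this]))
    have ih' := ih (by omega) fun θ θ' h1 h2 => hAi θ θ' h1 fun l hl => h2 l (by omega)
    unfold gaussParam at *
    simp only [hidden_succ, Wt, hk', dif_pos]
    rw [this, ih', pow_succ' _ (k + 1), mul_assoc]
    simp

lemma back_moment (s : ℕ) (hs : s = 1 ∨ s = 2) (r : ℕ) (hr : r ≤ d - 1) :
    ∫⁻ θ, ENNReal.ofReal ((∑ i, back d0 d n θ r i ^ 2) ^ s) ∂(gaussParam d0 d n) =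
      ENNReal.ofReal (momC s n) ^ (r + 1) := by
  induction r with
  | zero =>
    have := step (ι := Param d0 d n) (fun ij : Fin n × Unit => .inl ij.1)
      (fun a b h => Prod.ext (by simpa using h) rfl) s hs (fun _ => 1) measurable_const
      (fun _ _ => 1) measurable_const (fun _ _ _ => rfl) (fun _ _ _ => rfl)
    unfold gaussParam
    simpa [back] using this
  | succ r ih =>
    have hk' : d - 1 - (r + 1) < d - 1 := by omega
    have := step (ι := Param d0 d n)
      (fun ij : Fin n × Fin n => .inr (.inr (⟨d - 1 - (r + 1), hk'⟩, ij.2, ij.1)))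
      (fun a b h => by
        simp at h
        exact Prod.ext h.2 h.1) s hs (fun _ => 1) measurable_const
      (fun θ => back d0 d n θ r) (back_meas r) (fun _ _ _ => rfl)
      (fun θ θ' h => back_congr θ θ' r (fun i => h _ (by simp)) fun l hl i j => h _ (by
        have : (⟨d - 1 - (r + 1), hk'⟩ : Fin (d - 1)) ≠ l := by rintro rfl; simp at hl; omega
        simp [this]))
    have ih' := ih (by omega)
    unfold gaussParam at *
    simp only [back, Wt, hk', dif_pos]
    simp only [one_mul] at this
    rw [this, ih', pow_succ' _ (r + 1)]
    simp

lemma momC_nonneg (s n : ℕ) : 0 ≤ momC s n := by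
  unfold momC; split_ifs <;> positivity

lemma T_moment (hd : 1 ≤ d) (s : ℕ) (hs : s = 1 ∨ s = 2) (x : Fin d0 → ℝ)
    (τ : Unit ⊕ Unit ⊕ Fin (d - 1)) :
    ∫⁻ θ, ENNReal.ofReal (T d0 d n x θ τ ^ s) ∂(gaussParam d0 d n) =
      ENNReal.ofReal (momC s n ^ d * (∑ j, x j ^ 2) ^ s) := by
  have hP : IsProbabilityMeasure (gaussParam d0 d n) := by unfold gaussParam; infer_instance
  rw [ENNReal.ofReal_mul (pow_nonneg (momC_nonneg s n) d), ENNReal.ofReal_pow (momC_nonneg s n)]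
  rcases τ with _ | _ | k
  · have := hid_moment (n := n) s hs x (fun _ => 1) measurable_const (d - 1) le_rfl (fun _ _ _ _ => rfl)
    simpa [T, Nat.sub_add_cancel hd] using this
  · simp only [T, mul_pow]
    have : ∀ θ, ENNReal.ofReal ((∑ i, back d0 d n θ (d - 1) i ^ 2) ^ s * (∑ j, x j ^ 2) ^ s) =
        ENNReal.ofReal ((∑ i, back d0 d n θ (d - 1) i ^ 2) ^ s) *
        ENNReal.ofReal ((∑ j, x j ^ 2) ^ s) := fun θ => ENNReal.ofReal_mul (by positivity)
    simp_rw [this]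
    rw [lintegral_mul_const' _ _ ENNReal.ofReal_ne_top, back_moment s hs _ le_rfl,
      Nat.sub_add_cancel hd]
  · have hk := k.2
    simp only [T, mul_pow]
    have : ∀ θ, ENNReal.ofReal ((∑ i, back d0 d n θ (d - 1 - (k + 1)) i ^ 2) ^ s *
          (∑ j, hidden d0 d n θ x k j ^ 2) ^ s) =
        ENNReal.ofReal ((∑ i, back d0 d n θ (d - 1 - (k + 1)) i ^ 2) ^ s) *
        ENNReal.ofReal ((∑ j, hidden d0 d n θ x k j ^ 2) ^ s) :=
      fun θ => ENNReal.ofReal_mul (by positivity)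
    simp_rw [this]
    have hb : ∀ i, Measurable fun θ : Param d0 d n → ℝ => back d0 d n θ (d - 1 - (k + 1)) i :=
      fun i => (back_diff _ i).continuous.measurable
    rw [hid_moment s hs x (fun θ => ENNReal.ofReal ((∑ i, back d0 d n θ (d - 1 - (k + 1)) i ^ 2) ^ s))
      (by fun_prop) k (by omega) (fun θ θ' h1 h2 => by
        rw [back_congr θ θ' (d - 1 - (k + 1)) h1 fun l hl => h2 l (by omega)]),
      back_moment s hs _ (by omega), ← mul_assoc, ← pow_add]
    congr 2
    omega

lemma T_nonneg (x : Fin d0 → ℝ) (θ : Param d0 d n → ℝ) (τ : Unit ⊕ Unit ⊕ Fin (d - 1)) :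
    0 ≤ T d0 d n x θ τ := by
  rcases τ with _ | _ | k <;> simp only [T] <;> positivity

lemma T_meas (x : Fin d0 → ℝ) (τ : Unit ⊕ Unit ⊕ Fin (d - 1)) :
    Measurable fun θ : Param d0 d n → ℝ => T d0 d n x θ τ := by
  have hb : ∀ r i, Measurable fun θ : Param d0 d n → ℝ => back d0 d n θ r i :=
    fun r i => (back_diff _ i).continuous.measurable
  have hh : ∀ r i, Measurable fun θ : Param d0 d n → ℝ => hidden d0 d n θ x r i :=
    fun r i => (hidden_diff x r i).continuous.measurable
  rcases τ with _ | _ | k <;> simp only [T] <;> fun_prop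

lemma T_int (hd : 1 ≤ d) (s : ℕ) (hs : s = 1 ∨ s = 2) (x : Fin d0 → ℝ)
    (τ : Unit ⊕ Unit ⊕ Fin (d - 1)) :
    Integrable (fun θ => T d0 d n x θ τ ^ s) (gaussParam d0 d n) ∧
    ∫ θ, T d0 d n x θ τ ^ s ∂(gaussParam d0 d n) = momC s n ^ d * (∑ j, x j ^ 2) ^ s := by
  have h := T_moment (n := n) hd s hs x τ
  have hm : AEStronglyMeasurable (fun θ => T d0 d n x θ τ ^ s) (gaussParam d0 d n) :=
    ((T_meas x τ).pow_const s).aestronglyMeasurable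
  have h0 : 0 ≤ᵐ[gaussParam d0 d n] fun θ => T d0 d n x θ τ ^ s :=
    Filter.Eventually.of_forall fun θ => pow_nonneg (T_nonneg x θ τ) s
  constructor
  · rw [← lintegral_ofReal_ne_top_iff_integrable hm h0, h]
    exact ENNReal.ofReal_ne_top
  · rw [integral_eq_lintegral_of_nonneg_ae h0 hm, h, ENNReal.toReal_ofReal]
    have := momC_nonneg s n
    positivity

lemma var_sum {Ω κ : Type*} [MeasurableSpace Ω] [Fintype κ] (P : Measure Ω) [IsProbabilityMeasure P]
    (Y : κ → Ω → ℝ) (hY : ∀ τ, MemLp (Y τ) 2 P) :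
    ∫ ω, (∑ τ, Y τ ω) ^ 2 ∂P - (∫ ω, ∑ τ, Y τ ω ∂P) ^ 2 ≤
      Fintype.card κ * ∑ τ, (∫ ω, Y τ ω ^ 2 ∂P - (∫ ω, Y τ ω ∂P) ^ 2) := by
  have hS : MemLp (fun ω => ∑ τ, Y τ ω) 2 P := memLp_finsetSum _ fun τ _ => hY τ
  have e1 := variance_eq_sub hS
  have e2 := fun τ => variance_eq_sub (hY τ)
  simp only [Pi.pow_apply] at e1 e2
  rw [← e1]
  simp_rw [← e2]
  rw [variance_eq_integral hS.aemeasurable]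
  simp_rw [fun τ => variance_eq_integral (hY τ).aemeasurable]
  have hi : ∀ τ ∈ Finset.univ, Integrable (fun ω => (Y τ ω - ∫ x, Y τ x ∂P) ^ 2) P :=
    fun τ _ => ((hY τ).sub (memLp_const _)).integrable_sq
  rw [← integral_finsetSum _ hi, ← integral_const_mul]
  refine integral_mono (hS.sub (memLp_const _)).integrable_sq
    ((integrable_finsetSum _ hi).const_mul _) fun ω => ?_
  simp only
  rw [integral_finsetSum _ fun τ _ => (hY τ).integrable (by norm_num), ← Finset.sum_sub_distrib]
  simpa using sq_sum_le_card_mul_sum_sq (s := (Finset.univ : Finset κ))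
    (f := fun τ => Y τ ω - ∫ x, Y τ x ∂P)

lemma arith (n d : ℕ) (hn : 1 ≤ n) :
    (n : ℝ) * ((n:ℝ) + 2) ^ d ≤ (n + 3 ^ d - 1) * (n:ℝ) ^ d := by
  have hn' : (1:ℝ) ≤ n := by exact_mod_cast hn
  induction d with
  | zero => simp
  | succ d ih =>
    have h3 : (1:ℝ) ≤ 3 ^ d := one_le_pow₀ (by norm_num)
    calc (n : ℝ) * ((n:ℝ) + 2) ^ (d + 1) = (n * ((n:ℝ) + 2) ^ d) * (n + 2) := by ring
      _ ≤ ((n + 3 ^ d - 1) * (n:ℝ) ^ d) * (n + 2) := by gcongr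
      _ = ((n + 3 ^ d - 1) * (n + 2)) * (n:ℝ) ^ d := by ring
      _ ≤ ((n + 3 ^ (d + 1) - 1) * n) * (n:ℝ) ^ d := by
        gcongr ?_ * _
        rw [pow_succ]
        nlinarith
      _ = _ := by ring

end net

/-- for a deep linear fully connected network of depth `d` and width `n`,
the variance of the NTK at fixed inputs is bounded by `K / n` with `K` independent of `n`. -/
theorem deep_linear_fc_ntk_variance (d0 d : ℕ) (hd0 : 0 < d0) (hd : 1 ≤ d)
    (x x' : Fin d0 → ℝ) :
    ∃ K : ℝ, ∀ n : ℕ, 1 ≤ n →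
      (∫ θ, (NTK d0 d n θ x x') ^ 2 ∂(gaussParam d0 d n))
        - (∫ θ, NTK d0 d n θ x x' ∂(gaussParam d0 d n)) ^ 2 ≤ K / (n : ℝ) := by
  refine ⟨Fintype.card ((Unit ⊕ Unit ⊕ Fin (d - 1)) × Bool) *
    ∑ κ : (Unit ⊕ Unit ⊕ Fin (d - 1)) × Bool, (1/16) * (d0:ℝ)⁻¹ ^ 2 * 3 ^ d *
      (∑ j, (if κ.2 then x + x' else x - x') j ^ 2) ^ 2, fun n hn => ?_⟩
  have hP : IsProbabilityMeasure (gaussParam d0 d n) := by unfold gaussParam; infer_instance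
  have hn' : (1:ℝ) ≤ n := by exact_mod_cast hn
  set c : ℝ := ((n : ℝ) ^ d * (d0 : ℝ))⁻¹ with hc
  set z : Bool → Fin d0 → ℝ := fun b => if b then x + x' else x - x' with hz
  set ε : Bool → ℝ := fun b => if b then 1/4 else -(1/4) with hε
  set Y : (Unit ⊕ Unit ⊕ Fin (d - 1)) × Bool → (Param d0 d n → ℝ) → ℝ :=
    fun κ θ => (c * ε κ.2) * T d0 d n (z κ.2) θ κ.1 with hYd
  have hN : ∀ θ, NTK d0 d n θ x x' = ∑ κ, Y κ θ := by
    intro θ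
    rw [NTK_eq, Fintype.sum_prod_type, Finset.mul_sum]
    refine Finset.sum_congr rfl fun τ _ => ?_
    simp [hYd, hε, hz]
    ring
  have hY : ∀ κ, MemLp (Y κ) 2 (gaussParam d0 d n) := by
    intro κ
    refine MemLp.const_mul ?_ _
    rw [memLp_two_iff_integrable_sq (T_meas _ _).aestronglyMeasurable]
    exact (T_int hd 2 (by simp) _ _).1
  simp_rw [hN]
  refine (var_sum _ Y hY).trans ?_
  rw [mul_div_assoc, Finset.sum_div]
  refine mul_le_mul_of_nonneg_left (Finset.sum_le_sum fun κ _ => ?_) (by positivity)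
  have h1 := (T_int (n := n) hd 1 (by simp) (z κ.2) κ.1).2
  have h2 := (T_int (n := n) hd 2 (by simp) (z κ.2) κ.1).2
  simp only [pow_one] at h1
  simp only [hYd, mul_pow]
  rw [integral_const_mul, integral_const_mul, h1, h2]
  have hz2 : (∑ j, (if κ.2 then x + x' else x - x') j ^ 2) = ∑ j, z κ.2 j ^ 2 := rfl
  rw [hz2]
  generalize ∑ j, z κ.2 j ^ 2 = q
  have hε2 : ε κ.2 ^ 2 = 1/16 := by
    simp only [hε]; split_ifs <;> norm_num
  have hA := arith n d hn
  have m1 : momC 1 n = n := by simp [momC]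
  have m2 : momC 2 n = n * (n + 2) := by simp [momC]
  rw [m1, m2, mul_pow, mul_pow, mul_pow, hε2, hc, le_div_iff₀ (by positivity)]
  have hnd : (0:ℝ) < (n:ℝ) ^ d := by positivity
  have h3 : (n:ℝ) * ((n:ℝ) + 2) ^ d - n * n ^ d ≤ 3 ^ d * (n:ℝ) ^ d := by nlinarith
  rw [mul_inv, mul_pow]
  calc _ = (1/16 * (d0:ℝ)⁻¹ ^ 2 * q ^ 2) * (((n:ℝ) ^ d)⁻¹ ^ 2 * n ^ d) *
        ((n:ℝ) * ((n:ℝ) + 2) ^ d - n * n ^ d) := by ring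
    _ ≤ (1/16 * (d0:ℝ)⁻¹ ^ 2 * q ^ 2) * (((n:ℝ) ^ d)⁻¹ ^ 2 * n ^ d) * (3 ^ d * (n:ℝ) ^ d) := by
      gcongr
    _ = (1/16 * (d0:ℝ)⁻¹ ^ 2 * q ^ 2) * 3 ^ d * ((((n:ℝ) ^ d)⁻¹ * n ^ d) ^ 2) := by ring
    _ = _ := by rw [inv_mul_cancel₀ hnd.ne']; ring

end DeepLinearFC
end

section
/- Let f be a deep linear fully connected network of depth d and width n. For fixed inputs x_1, x_2, x_3, x_4 ∈ ℝ^{d_0}, consider C = E_θ[ Σ_{μ,ν} (∂²f(x_1)/∂θ_μ∂θ_ν)(∂f(x_2)/∂θ_μ)(∂f(x_3)/∂θ_ν) f(x_4) ], where μ, ν each run over all parameter entries. Then there exists a constant K, independent of n, such that |C| ≤ K / n for all n ≥ 1. -/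
open MeasureTheory ProbabilityTheory

namespace DeepLinearFC

/-- The correlation function
`C = E_θ[ Σ_{μ,ν} ∂²f(x₁)/∂θ_μ∂θ_ν ⬝ ∂f(x₂)/∂θ_μ ⬝ ∂f(x₃)/∂θ_ν ⬝ f(x₄) ]`. -/
noncomputable def corrDTheta (d0 d n : ℕ) (x₁ x₂ x₃ x₄ : Fin d0 → ℝ) : ℝ :=
  ∫ θ, (∑ μ : Param d0 d n, ∑ ν : Param d0 d n,
      iteratedFDeriv ℝ 2 (fun θ' => net d0 d n θ' x₁) θ ![Pi.single μ 1, Pi.single ν 1] *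
        fderiv ℝ (fun θ' => net d0 d n θ' x₂) θ (Pi.single μ 1) *
        fderiv ℝ (fun θ' => net d0 d n θ' x₃) θ (Pi.single ν 1) *
        net d0 d n θ x₄) ∂(gaussParam d0 d n)

set_option linter.unusedSectionVars false

/-! ### Gaussian preliminaries -/

lemma gauss_int_one : ∫ x, x ∂gaussianReal 0 1 = 0 := integral_id_gaussianReal

lemma gauss_int_two : ∫ x, x * x ∂gaussianReal 0 1 = 1 := by
  have h := variance_fun_id_gaussianReal (μ := 0) (v := 1)
  rw [variance_eq_integral (by fun_prop)] at h
  simpa [integral_id_gaussianReal, pow_two] using h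

lemma gauss_int_four : ∫ x, x * x * (x * x) ∂gaussianReal 0 1 = 3 := by
  have h0 : (0 : ℝ) ∈ interior (integrableExpSet id (gaussianReal 0 1)) := by simp
  have h := iteratedDeriv_mgf_zero h0 4
  rw [mgf_id_gaussianReal] at h
  have e : (fun t : ℝ => Real.exp ((0 : ℝ) * t + ((1 : NNReal) : ℝ) * t ^ 2 / 2))
      = fun t => Real.exp (t ^ 2 / 2) := by
    funext t; simp
  rw [e] at h
  have hd : ∀ t : ℝ, HasDerivAt (fun t : ℝ => Real.exp (t ^ 2 / 2)) (t * Real.exp (t ^ 2 / 2)) t := by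
    intro t
    have := ((hasDerivAt_pow 2 t).div_const 2).exp
    convert this using 1
    simp; ring
  have d1 : deriv (fun t : ℝ => Real.exp (t ^ 2 / 2)) = fun t => t * Real.exp (t ^ 2 / 2) := by
    funext t; exact (hd t).deriv
  have d2 : deriv (fun t : ℝ => t * Real.exp (t ^ 2 / 2))
      = fun t => (1 + t ^ 2) * Real.exp (t ^ 2 / 2) := by
    funext t
    rw [((hasDerivAt_id' t).fun_mul (hd t)).deriv]; ring
  have d3 : deriv (fun t : ℝ => (1 + t ^ 2) * Real.exp (t ^ 2 / 2))
      = fun t => (3 * t + t ^ 3) * Real.exp (t ^ 2 / 2) := by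
    funext t
    rw [(((hasDerivAt_pow 2 t).const_add 1).fun_mul (hd t)).deriv]
    simp; ring
  have d4 : deriv (fun t : ℝ => (3 * t + t ^ 3) * Real.exp (t ^ 2 / 2)) 0 = 3 := by
    rw [((((hasDerivAt_id' (0 : ℝ)).const_mul 3).fun_add (hasDerivAt_pow 3 (0 : ℝ))).fun_mul
      (hd 0)).deriv]
    simp
  rw [iteratedDeriv_succ, iteratedDeriv_succ, iteratedDeriv_succ, iteratedDeriv_one, d1, d2, d3, d4]
    at h
  rw [h]
  refine integral_congr_ae (.of_forall fun x => ?_)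
  simp; ring

/-- Standard Gaussian product measure. -/
noncomputable def gpi (κ : Type) [Fintype κ] : Measure (κ → ℝ) :=
  Measure.pi fun _ => gaussianReal 0 1

instance (κ : Type) [Fintype κ] : IsProbabilityMeasure (gpi κ) := by
  unfold gpi; infer_instance

/-- All moments finite. -/
def Good {Ω : Type} [MeasurableSpace Ω] (μ : Measure Ω) (F : Ω → ℝ) : Prop :=
  ∀ p : ENNReal, p ≠ ⊤ → MemLp F p μ

section good
variable {Ω : Type} [MeasurableSpace Ω] {μ : Measure Ω} [IsProbabilityMeasure μ] {F G : Ω → ℝ}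

lemma Good.integrable (h : Good μ F) : Integrable F μ :=
  memLp_one_iff_integrable.1 (h 1 (by simp))

lemma Good.const (c : ℝ) : Good μ (fun _ => c) := fun _ _ => memLp_const c

lemma Good.add (hF : Good μ F) (hG : Good μ G) : Good μ (fun z => F z + G z) :=
  fun p hp => (hF p hp).add (hG p hp)

lemma Good.mul (hF : Good μ F) (hG : Good μ G) : Good μ (fun z => F z * G z) := by
  intro p hp
  have : ENNReal.HolderTriple (2 * p) (2 * p) p := by
    constructor
    rw [ENNReal.mul_inv (by simp) (by simp), ← add_mul, ENNReal.inv_two_add_inv_two, one_mul]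
  exact (hG (2 * p) (ENNReal.mul_ne_top (by simp) hp)).mul'
    (hF (2 * p) (ENNReal.mul_ne_top (by simp) hp))

lemma Good.sum {ι : Type*} (s : Finset ι) {F : ι → Ω → ℝ} (h : ∀ i, Good μ (F i)) :
    Good μ (fun z => ∑ i ∈ s, F i z) :=
  fun p hp => memLp_finsetSum s fun i _ => h i p hp

lemma Good.comp {Ω' : Type} [MeasurableSpace Ω'] {ν : Measure Ω'} (h : Good μ F) {T : Ω' → Ω}
    (hT : MeasurePreserving T ν μ) : Good ν (fun z => F (T z)) :=
  fun p hp => (h p hp).comp_measurePreserving hT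
end good

section wick
variable {κ : Type} [Fintype κ]

lemma Good.coord (i : κ) : Good (gpi κ) (fun z => z i) := by
  intro p hp
  exact (memLp_id_gaussianReal' p hp).comp_measurePreserving
    (measurePreserving_eval (fun _ : κ => gaussianReal 0 1) i)

open Classical in
lemma mix_mp (S : Set κ) : MeasurePreserving
    (fun w : (κ → ℝ) × (κ → ℝ) => fun i => if i ∈ S then w.2 i else w.1 i)
    ((gpi κ).prod (gpi κ)) (gpi κ) := by
  have h1 := (measurePreserving_arrowProdEquivProdArrow ℝ ℝ κ (fun _ => gaussianReal 0 1)
    (fun _ => gaussianReal 0 1)).symm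
  have h2 := measurePreserving_pi (ι := κ) (fun _ => (gaussianReal 0 1).prod (gaussianReal 0 1))
    (fun _ => gaussianReal 0 1) (f := fun i w => if i ∈ S then w.2 else w.1) (by
      intro i
      by_cases h : i ∈ S
      · simp only [h, if_true]; exact measurePreserving_snd
      · simp only [h, if_false]; exact measurePreserving_fst)
  exact h2.comp h1

/-- Independence of functions of disjoint coordinate sets. -/
lemma integral_indep (S : Set κ) (P Q : (κ → ℝ) → ℝ)
    (hPm : AEStronglyMeasurable P (gpi κ)) (hQm : AEStronglyMeasurable Q (gpi κ))
    (hP : ∀ z z', (∀ i ∈ S, z i = z' i) → P z = P z')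
    (hQ : ∀ z z', (∀ i ∉ S, z i = z' i) → Q z = Q z') :
    ∫ z, P z * Q z ∂gpi κ = (∫ z, P z ∂gpi κ) * ∫ z, Q z ∂gpi κ := by
  classical
  have hm := mix_mp S
  rw [← hm.map_eq, integral_map hm.measurable.aemeasurable
    (by rw [hm.map_eq]; exact hPm.mul hQm), hm.map_eq, mul_comm, ← integral_prod_mul]
  refine integral_congr_ae (.of_forall fun w => ?_)
  simp only
  rw [mul_comm]
  congr 1
  · exact hQ _ _ fun i hi => by simp [hi]
  · exact hP _ _ fun i hi => by simp [hi]

lemma int_coord (f : ℝ → ℝ) (hf : Continuous f) (i : κ) :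
    ∫ z, f (z i) ∂gpi κ = ∫ x, f x ∂gaussianReal 0 1 := by
  have := measurePreserving_eval (fun _ : κ => gaussianReal 0 1) i
  rw [← this.map_eq, integral_map this.measurable.aemeasurable hf.aestronglyMeasurable]
  rfl

lemma int_zero (p : κ) (Q : (κ → ℝ) → ℝ) (hQm : Continuous Q)
    (hQ : ∀ z z', (∀ i ≠ p, z i = z' i) → Q z = Q z') :
    ∫ z, z p * Q z ∂gpi κ = 0 := by
  rw [integral_indep {p} (fun z => z p) Q (continuous_apply p).aestronglyMeasurable hQm.aestronglyMeasurable
    (fun z z' h => h p rfl) (fun z z' h => hQ z z' fun i hi => h i hi),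
    int_coord (fun x => x) continuous_id, gauss_int_one, zero_mul]

/-- Isserlis: sum over pairings. -/
def wick {κ : Type} [DecidableEq κ] (p q r s : κ) : ℝ :=
  (if p = q ∧ r = s then 1 else 0) + (if p = r ∧ q = s then 1 else 0)
    + (if p = s ∧ q = r then 1 else 0)

lemma isserlis [DecidableEq κ] (p q r s : κ) :
    ∫ z, z p * z q * (z r * z s) ∂gpi κ = wick p q r s := by
  have two : ∀ p q : κ, p ≠ q → ∫ z, z p * z p * (z q * z q) ∂gpi κ = 1 := by
    intro p q h
    rw [integral_indep {p} (fun z => z p * z p) (fun z => z q * z q)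
      (by fun_prop) (by fun_prop) (fun z z' h => by simp [h p rfl])
      (fun z z' h' => by simp [h' q (fun e => h e.symm)]),
      int_coord (fun x => x * x) (by fun_prop), int_coord (fun x => x * x) (by fun_prop),
      gauss_int_two, one_mul]
  unfold wick
  by_cases hpq : p = q
  · subst hpq
    by_cases hrs : r = s
    · subst hrs
      by_cases hpr : p = r
      · subst hpr
        rw [int_coord (fun x => x * x * (x * x)) (by fun_prop), gauss_int_four]
        norm_num
      · rw [two p r hpr]; simp [hpr]
    · by_cases hpr : p = r
      · subst hpr
        have : (fun z : κ → ℝ => z p * z p * (z p * z s)) = fun z => z s * (z p * z p * z p) := by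
          funext z; ring
        rw [this, int_zero s _ (by fun_prop) (fun z z' h => by simp [h p hrs])]
        simp [hrs]
      · have : (fun z : κ → ℝ => z p * z p * (z r * z s)) = fun z => z r * (z p * z p * z s) := by
          funext z; ring
        rw [this, int_zero r _ (by fun_prop)
          (fun z z' h => by simp [h p hpr, h s (fun e => hrs e.symm)])]
        simp [hrs, hpr]
  · by_cases hpr : p = r
    · subst hpr
      by_cases hqs : q = s
      · subst hqs
        have : (fun z : κ → ℝ => z p * z q * (z p * z q)) = fun z => z p * z p * (z q * z q) := by
          funext z; ring
        rw [this, two p q hpq]; simp [hpq]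
      · have : (fun z : κ → ℝ => z p * z q * (z p * z s)) = fun z => z q * (z p * z p * z s) := by
          funext z; ring
        rw [this, int_zero q _ (by fun_prop)
          (fun z z' h => by simp [h p hpq, h s (fun e => hqs e.symm)])]
        simp [hpq, hqs, Ne.symm hpq]
    · by_cases hps : p = s
      · subst hps
        by_cases hqr : q = r
        · subst hqr
          have : (fun z : κ → ℝ => z p * z q * (z q * z p)) = fun z => z p * z p * (z q * z q) := by
            funext z; ring
          rw [this, two p q hpq]; simp [hpq]
        · have : (fun z : κ → ℝ => z p * z q * (z r * z p)) = fun z => z q * (z p * z p * z r) := by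
            funext z; ring
          rw [this, int_zero q _ (by fun_prop)
            (fun z z' h => by simp [h p hpq, h r (fun e => hqr e.symm)])]
          simp [hpq, hqr, hpr]
      · have : (fun z : κ → ℝ => z p * z q * (z r * z s)) = fun z => z p * (z q * z r * z s) := by
          funext z; ring
        rw [this, int_zero p _ (by fun_prop)
          (fun z z' h => by simp [h q (Ne.symm hpq), h r (Ne.symm hpr), h s (Ne.symm hps)])]
        simp [hpq, hpr, hps]

/-- Integrating out one layer of four networks. -/
lemma layer_step [DecidableEq κ] {J : Type} [Fintype J] (S : Set κ) (e : Fin 4 → J → κ)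
    (h : Fin 4 → J → (κ → ℝ) → ℝ) (he : ∀ k j, e k j ∈ S) (hg : ∀ k j, Good (gpi κ) (h k j))
    (hS : ∀ k j z z', (∀ i ∉ S, z i = z' i) → h k j z = h k j z') :
    ∫ z, (∑ j, z (e 0 j) * h 0 j z) * (∑ j, z (e 1 j) * h 1 j z) *
      ((∑ j, z (e 2 j) * h 2 j z) * (∑ j, z (e 3 j) * h 3 j z)) ∂gpi κ =
    ∑ j0, ∑ j1, ∑ j2, ∑ j3, wick (e 0 j0) (e 1 j1) (e 2 j2) (e 3 j3) *
      ∫ z, h 0 j0 z * h 1 j1 z * (h 2 j2 z * h 3 j3 z) ∂gpi κ := by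
  have key : ∀ j0 j1 j2 j3, Good (gpi κ) (fun z => (z (e 0 j0) * z (e 1 j1) *
      (z (e 2 j2) * z (e 3 j3))) * (h 0 j0 z * h 1 j1 z * (h 2 j2 z * h 3 j3 z))) := by
    intro j0 j1 j2 j3
    exact (((Good.coord _).mul (Good.coord _)).mul ((Good.coord _).mul (Good.coord _))).mul
      (((hg _ _).mul (hg _ _)).mul ((hg _ _).mul (hg _ _)))
  have e1 : ∀ z : κ → ℝ, (∑ j, z (e 0 j) * h 0 j z) * (∑ j, z (e 1 j) * h 1 j z) *
      ((∑ j, z (e 2 j) * h 2 j z) * (∑ j, z (e 3 j) * h 3 j z)) =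
      ∑ j0, ∑ j1, ∑ j2, ∑ j3, (z (e 0 j0) * z (e 1 j1) *
      (z (e 2 j2) * z (e 3 j3))) * (h 0 j0 z * h 1 j1 z * (h 2 j2 z * h 3 j3 z)) := by
    intro z
    rw [Finset.sum_mul_sum, Finset.sum_mul_sum, Finset.sum_mul]
    refine Finset.sum_congr rfl fun j0 _ => ?_
    rw [Finset.sum_mul]
    refine Finset.sum_congr rfl fun j1 _ => ?_
    rw [Finset.mul_sum]
    refine Finset.sum_congr rfl fun j2 _ => ?_
    rw [Finset.mul_sum]
    refine Finset.sum_congr rfl fun j3 _ => ?_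
    ring
  simp_rw [e1]
  rw [integral_finsetSum _ fun j0 _ => (Good.sum _ fun j1 => Good.sum _ fun j2 =>
    Good.sum _ fun j3 => key j0 j1 j2 j3).integrable]
  refine Finset.sum_congr rfl fun j0 _ => ?_
  rw [integral_finsetSum _ fun j1 _ => (Good.sum _ fun j2 =>
    Good.sum _ fun j3 => key j0 j1 j2 j3).integrable]
  refine Finset.sum_congr rfl fun j1 _ => ?_
  rw [integral_finsetSum _ fun j2 _ => (
    Good.sum _ fun j3 => key j0 j1 j2 j3).integrable]
  refine Finset.sum_congr rfl fun j2 _ => ?_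
  rw [integral_finsetSum _ fun j3 _ => (key j0 j1 j2 j3).integrable]
  refine Finset.sum_congr rfl fun j3 _ => ?_
  rw [integral_indep S (fun z => z (e 0 j0) * z (e 1 j1) * (z (e 2 j2) * z (e 3 j3)))
    (fun z => h 0 j0 z * h 1 j1 z * (h 2 j2 z * h 3 j3 z)) (by fun_prop)
    (((hg _ _).mul (hg _ _)).mul ((hg _ _).mul (hg _ _))).integrable.aestronglyMeasurable
    (fun z z' hz => by simp [hz _ (he _ _)])
    (fun z z' hz => by simp only [hS _ _ z z' hz]), isserlis]

end wick
/-! ### Layer structure and derivatives -/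

/-- Layer of a parameter. -/
def layer {d0 d n : ℕ} : Param d0 d n → ℕ
  | .inl _ => d
  | .inr (.inl _) => 0
  | .inr (.inr (l, _, _)) => (l : ℕ) + 1

/-- Replace layer `a` of `θ` by that of `ω`. -/
def rep {d0 d n : ℕ} (a : ℕ) (θ ω : Param d0 d n → ℝ) : Param d0 d n → ℝ :=
  fun p => if layer p = a then ω p else θ p

section layers
variable {d0 d n : ℕ}

lemma hidden_congr_s9 (θ θ' : Param d0 d n → ℝ) (x : Fin d0 → ℝ) (m : ℕ)
    (h : ∀ p, layer p ≤ m → θ p = θ' p) : hidden d0 d n θ x m = hidden d0 d n θ' x m := by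
  induction m with
  | zero =>
    funext i
    simp only [hidden]
    exact Finset.sum_congr rfl fun j _ => by rw [h _ (by simp [layer])]
  | succ m ih =>
    funext i
    simp only [hidden]
    rw [ih fun p hp => h p (by omega)]
    refine Finset.sum_congr rfl fun j _ => ?_
    split_ifs with hm
    · rw [h _ (by simp [layer])]
    · rfl

lemma hidden_rep_linear (θ ω ω' : Param d0 d n → ℝ) (x : Fin d0 → ℝ) (t : ℝ) (a m : ℕ)
    (ha : a ≤ m) (i : Fin n) :
    hidden d0 d n (rep a θ (t • ω + ω')) x m i =
      t * hidden d0 d n (rep a θ ω) x m i + hidden d0 d n (rep a θ ω') x m i := by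
  induction m generalizing i with
  | zero =>
    obtain rfl : a = 0 := by omega
    simp only [hidden, Finset.mul_sum, ← Finset.sum_add_distrib]
    refine Finset.sum_congr rfl fun j _ => ?_
    simp [rep, layer]; ring
  | succ m ih =>
    simp only [hidden, Finset.mul_sum, ← Finset.sum_add_distrib]
    refine Finset.sum_congr rfl fun j _ => ?_
    split_ifs with hm
    · by_cases ham : a = m + 1
      · subst ham
        have e : ∀ ω : Param d0 d n → ℝ,
            hidden d0 d n (rep (m + 1) θ ω) x m = hidden d0 d n θ x m := fun ω =>
          hidden_congr_s9 _ _ _ _ fun p hp => by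
            simp only [rep]; rw [if_neg (by omega)]
        rw [e, e, e]
        simp [rep, layer]; ring
      · rw [ih (by omega)]
        have : ¬ (m + 1 = a) := fun h => ham h.symm
        simp [rep, layer, this]; ring
    · simp

lemma net_rep_linear (hd : 1 ≤ d) (θ ω ω' : Param d0 d n → ℝ) (x : Fin d0 → ℝ) (t : ℝ) (a : ℕ)
    (ha : a ≤ d) :
    net d0 d n (rep a θ (t • ω + ω')) x =
      t * net d0 d n (rep a θ ω) x + net d0 d n (rep a θ ω') x := by
  unfold net
  have : ∀ A B C c : ℝ, A = t * B + C → c * A = t * (c * B) + c * C := by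
    intro A B C c h; rw [h]; ring
  apply this
  simp only [Finset.mul_sum, ← Finset.sum_add_distrib]
  refine Finset.sum_congr rfl fun j _ => ?_
  by_cases hda : a = d
  · subst hda
    have e : ∀ ω : Param d0 a n → ℝ,
        hidden d0 a n (rep a θ ω) x (a - 1) = hidden d0 a n θ x (a - 1) := fun ω =>
      hidden_congr_s9 _ _ _ _ fun p hp => by
        simp only [rep]; rw [if_neg (by omega)]
    rw [e, e, e]
    simp [rep, layer]; ring
  · rw [hidden_rep_linear _ _ _ _ _ _ _ (by omega)]
    have : ¬ (d = a) := fun h => hda h.symm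
    simp [rep, layer, this]; ring

lemma rep_self (a : ℕ) (θ : Param d0 d n → ℝ) : rep a θ θ = θ := by
  funext p; simp [rep]

lemma rep_comm (a b : ℕ) (hab : a ≠ b) (θ ω ω' : Param d0 d n → ℝ) :
    rep a (rep b θ ω) ω' = rep b (rep a θ ω') ω := by
  funext p; simp only [rep]
  by_cases h : layer p = a
  · have : layer p ≠ b := by rw [h]; exact hab
    simp [h, hab]
  · simp [h]

lemma net_rep_zero (hd : 1 ≤ d) (θ : Param d0 d n → ℝ) (x : Fin d0 → ℝ) (a : ℕ)
    (ha : a ≤ d) : net d0 d n (rep a θ 0) x = 0 := by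
  have := net_rep_linear hd θ 0 0 x 1 a ha
  simp at this
  exact this

lemma net_rep_single_zero (hd : 1 ≤ d) (θ : Param d0 d n → ℝ) (x : Fin d0 → ℝ) (a : ℕ)
    (ha : a ≤ d) (μ : Param d0 d n) (hμ : layer μ ≠ a) :
    net d0 d n (rep a θ (Pi.single μ 1)) x = 0 := by
  rw [← net_rep_zero hd θ x a ha]
  congr 1
  funext p
  simp only [rep]
  split_ifs with h
  · have : p ≠ μ := by rintro rfl; exact hμ h
    simp [this]
  · rfl

lemma net_rep_expand (hd : 1 ≤ d) (θ ω : Param d0 d n → ℝ) (x : Fin d0 → ℝ) (a : ℕ)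
    (ha : a ≤ d) :
    net d0 d n (rep a θ ω) x = ∑ μ, ω μ * net d0 d n (rep a θ (Pi.single μ 1)) x := by
  let L : (Param d0 d n → ℝ) →ₗ[ℝ] ℝ :=
    { toFun := fun ω => net d0 d n (rep a θ ω) x
      map_add' := fun u w => by
        have := net_rep_linear hd θ u w x 1 a ha
        simpa using this
      map_smul' := fun t u => by
        have := net_rep_linear hd θ u 0 x t a ha
        rw [net_rep_zero hd θ x a ha] at this
        simpa using this }
  have := L.pi_apply_eq_sum_univ ω
  simp only [smul_eq_mul] at this
  have h2 : ∀ μ : Param d0 d n, (fun j => if μ = j then (1 : ℝ) else 0) = Pi.single μ 1 := by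
    intro μ; funext j; simp [Pi.single_apply, eq_comm]
  simp only [h2] at this
  exact this

lemma net_add_single (hd : 1 ≤ d) (θ : Param d0 d n → ℝ) (x : Fin d0 → ℝ) (μ : Param d0 d n)
    (t : ℝ) :
    net d0 d n (θ + t • Pi.single μ 1) x =
      net d0 d n θ x + t * net d0 d n (rep (layer μ) θ (Pi.single μ 1)) x := by
  have hl : layer μ ≤ d := by
    rcases μ with i | ⟨i, j⟩ | ⟨l, i, j⟩ <;> simp [layer]; omega
  have := net_rep_linear hd θ (Pi.single μ 1) θ x t (layer μ) hl
  rw [rep_self] at this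
  rw [add_comm (net d0 d n θ x), ← this]
  congr 1
  funext p
  simp only [rep, Pi.add_apply, Pi.smul_apply, smul_eq_mul]
  split_ifs with h
  · ring
  · have : p ≠ μ := by rintro rfl; exact h rfl
    simp [this]

lemma hidden_contDiff (x : Fin d0 → ℝ) (m : ℕ) (i : Fin n) :
    ContDiff ℝ 2 (fun θ : Param d0 d n → ℝ => hidden d0 d n θ x m i) := by
  induction m generalizing i with
  | zero =>
    simp only [hidden]
    fun_prop
  | succ m ih =>
    simp only [hidden]
    refine ContDiff.sum fun j _ => ?_
    refine ContDiff.mul ?_ (ih j)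
    split_ifs <;> fun_prop

lemma net_contDiff (x : Fin d0 → ℝ) :
    ContDiff ℝ 2 (fun θ : Param d0 d n → ℝ => net d0 d n θ x) := by
  unfold net
  refine contDiff_const.mul (ContDiff.sum fun j _ => ContDiff.mul (by fun_prop)
    (hidden_contDiff x _ j))

lemma fderiv_of_affine_s9 (F : (Param d0 d n → ℝ) → ℝ) (hF : Differentiable ℝ F)
    (θ e : Param d0 d n → ℝ) (B : ℝ) (h : ∀ t : ℝ, F (θ + t • e) = F θ + t * B) :
    fderiv ℝ F θ e = B := by
  rw [← (hF θ).lineDeriv_eq_fderiv, lineDeriv]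
  simp_rw [h]
  have := (((hasDerivAt_id' (0 : ℝ)).mul_const B).const_add (F θ)).deriv
  simpa using this

lemma fderiv_net (hd : 1 ≤ d) (θ : Param d0 d n → ℝ) (x : Fin d0 → ℝ) (μ : Param d0 d n) :
    fderiv ℝ (fun θ' => net d0 d n θ' x) θ (Pi.single μ 1) =
      net d0 d n (rep (layer μ) θ (Pi.single μ 1)) x :=
  fderiv_of_affine_s9 _ ((net_contDiff x).differentiable (by norm_num)) _ _ _
    (net_add_single hd θ x μ)

lemma hess_net (hd : 1 ≤ d) (θ : Param d0 d n → ℝ) (x : Fin d0 → ℝ) (μ ν : Param d0 d n) :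
    iteratedFDeriv ℝ 2 (fun θ' => net d0 d n θ' x) θ ![Pi.single μ 1, Pi.single ν 1] =
      if layer μ = layer ν then 0 else
      net d0 d n (rep (layer μ) (rep (layer ν) θ (Pi.single ν 1)) (Pi.single μ 1)) x := by
  rw [iteratedFDeriv_two_apply]
  simp only [Matrix.cons_val_zero, Matrix.cons_val_one]
  have hdiff : Differentiable ℝ (fderiv ℝ (fun θ' : Param d0 d n → ℝ => net d0 d n θ' x)) :=
    ((net_contDiff x).fderiv_right (m := 1) (by norm_num)).differentiable (by norm_num)
  have h1 : fderiv ℝ (fderiv ℝ (fun θ' => net d0 d n θ' x)) θ (Pi.single μ 1) (Pi.single ν 1) =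
      fderiv ℝ (fun θ'' => fderiv ℝ (fun θ' => net d0 d n θ' x) θ'' (Pi.single ν 1)) θ
        (Pi.single μ 1) := by
    rw [fderiv_clm_apply (hdiff θ) (by fun_prop)]
    simp
  rw [h1]
  refine fderiv_of_affine_s9 _ (by fun_prop) _ _ _ fun t => ?_
  simp only [fderiv_net hd]
  split_ifs with h
  · rw [mul_zero, add_zero]
    congr 1
    funext p
    simp only [rep]
    split_ifs with h2
    · rfl
    · have : p ≠ μ := by rintro rfl; exact h2 h
      simp [this]
  · rw [← net_add_single hd]
    congr 1
    funext p
    simp only [rep, Pi.add_apply, Pi.smul_apply]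
    split_ifs with h2
    · have : p ≠ μ := by rintro rfl; exact h h2
      simp [this]
    · rfl

lemma layer_le (μ : Param d0 d n) : layer μ ≤ d := by
  rcases μ with i | ⟨i, j⟩ | ⟨l, i, j⟩ <;> simp [layer]; omega

lemma wick_collapse (a b : ℕ) (hab : a ≠ b) (H : Param d0 d n → Param d0 d n → ℝ)
    (p q : Param d0 d n → ℝ) (hH : ∀ j k, layer j ≠ a → H j k = 0)
    (hp : ∀ j, layer j ≠ a → p j = 0) (hq : ∀ j, layer j ≠ b → q j = 0)
    (j0 j1 j2 j3 : Param d0 d n) :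
    wick j0 j1 j2 j3 * (H j0 j1 * (p j2 * q j3)) =
      if j1 = j3 then (if j0 = j2 then H j0 j1 * (p j0 * q j1) else 0) else 0 := by
  by_cases h0 : layer j0 = a
  swap
  · simp [hH j0 j1 h0]
  by_cases h2 : layer j2 = a
  swap
  · have : j0 ≠ j2 := by rintro rfl; exact h2 h0
    simp [hp j2 h2, this]
  by_cases h3 : layer j3 = b
  swap
  · rw [hq j3 h3]
    by_cases h13 : j1 = j3
    · subst h13; simp [hq j1 h3]
    · simp [h13]
  have h23 : j2 ≠ j3 := by rintro rfl; exact hab (h2.symm.trans h3)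
  have h03 : j0 ≠ j3 := by rintro rfl; exact hab (h0.symm.trans h3)
  unfold wick
  by_cases h4 : j0 = j2
  · subst h4
    by_cases h5 : j1 = j3
    · subst h5; simp [h03]
    · simp [h5, h03]
  · by_cases h5 : j1 = j3
    · subst h5; simp [h4, h23, h03]
    · simp [h4, h5, h23, h03]

/-- Integrating out the auxiliary copy `ω`. -/
lemma omega_integral (hd : 1 ≤ d) (θ : Param d0 d n → ℝ) (x₁ x₂ x₃ : Fin d0 → ℝ) (a b : ℕ)
    (ha : a ≤ d) (hb : b ≤ d) (hab : a ≠ b) :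
    ∫ ω, net d0 d n (rep a (rep b θ ω) ω) x₁ * (net d0 d n (rep a θ ω) x₂ *
      net d0 d n (rep b θ ω) x₃) ∂gpi (Param d0 d n) =
    ∑ μ, ∑ ν, net d0 d n (rep a (rep b θ (Pi.single ν 1)) (Pi.single μ 1)) x₁ *
      (net d0 d n (rep a θ (Pi.single μ 1)) x₂ * net d0 d n (rep b θ (Pi.single ν 1)) x₃) := by
  classical
  set H : Param d0 d n → Param d0 d n → ℝ := fun μ ν =>
    net d0 d n (rep a (rep b θ (Pi.single ν 1)) (Pi.single μ 1)) x₁ with hH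
  set p : Param d0 d n → ℝ := fun μ => net d0 d n (rep a θ (Pi.single μ 1)) x₂ with hp
  set q : Param d0 d n → ℝ := fun μ => net d0 d n (rep b θ (Pi.single μ 1)) x₃ with hq
  have e1 : ∀ ω : Param d0 d n → ℝ, net d0 d n (rep a (rep b θ ω) ω) x₁ =
      ∑ μ, ∑ ν, ω μ * ω ν * H μ ν := by
    intro ω
    rw [net_rep_expand hd _ _ _ _ ha]
    refine Finset.sum_congr rfl fun μ _ => ?_
    rw [rep_comm a b hab, net_rep_expand hd _ _ _ _ hb, Finset.mul_sum]
    refine Finset.sum_congr rfl fun ν _ => ?_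
    rw [rep_comm b a hab.symm]
    simp only [hH]; ring
  have e2 : ∀ ω : Param d0 d n → ℝ, net d0 d n (rep a (rep b θ ω) ω) x₁ *
      (net d0 d n (rep a θ ω) x₂ * net d0 d n (rep b θ ω) x₃) =
      ∑ μ, ∑ ν, ∑ μ', ∑ ν', (ω μ * ω ν * (ω μ' * ω ν')) * (H μ ν * (p μ' * q ν')) := by
    intro ω
    rw [e1, net_rep_expand hd θ ω x₂ a ha, net_rep_expand hd θ ω x₃ b hb, Finset.sum_mul_sum,
      Finset.sum_mul]
    refine Finset.sum_congr rfl fun μ _ => ?_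
    rw [Finset.sum_mul]
    refine Finset.sum_congr rfl fun ν _ => ?_
    rw [Finset.mul_sum]
    refine Finset.sum_congr rfl fun μ' _ => ?_
    rw [Finset.mul_sum]
    refine Finset.sum_congr rfl fun ν' _ => ?_
    simp only [hp, hq]
    ring
  have key : ∀ μ ν μ' ν' : Param d0 d n, Good (gpi (Param d0 d n)) (fun ω =>
      (ω μ * ω ν * (ω μ' * ω ν')) * (H μ ν * (p μ' * q ν'))) := fun μ ν μ' ν' =>
    (((Good.coord _).mul (Good.coord _)).mul ((Good.coord _).mul (Good.coord _))).mul
      (Good.const _)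
  simp_rw [e2]
  rw [integral_finsetSum _ fun j0 _ => (Good.sum _ fun j1 => Good.sum _ fun j2 =>
    Good.sum _ fun j3 => key j0 j1 j2 j3).integrable]
  refine Finset.sum_congr rfl fun j0 _ => ?_
  rw [integral_finsetSum _ fun j1 _ => (Good.sum _ fun j2 =>
    Good.sum _ fun j3 => key j0 j1 j2 j3).integrable]
  refine Finset.sum_congr rfl fun j1 _ => ?_
  rw [integral_finsetSum _ fun j2 _ => (
    Good.sum _ fun j3 => key j0 j1 j2 j3).integrable]
  have e3 : ∀ j2, ∫ ω : Param d0 d n → ℝ, ∑ j3, (ω j0 * ω j1 * (ω j2 * ω j3)) *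
      (H j0 j1 * (p j2 * q j3)) ∂gpi (Param d0 d n) =
      if j0 = j2 then H j0 j1 * (p j0 * q j1) else 0 := by
    intro j2
    rw [integral_finsetSum _ fun j3 _ => (key j0 j1 j2 j3).integrable]
    have e4 : ∀ j3, ∫ ω : Param d0 d n → ℝ, (ω j0 * ω j1 * (ω j2 * ω j3)) *
      (H j0 j1 * (p j2 * q j3)) ∂gpi (Param d0 d n) =
      if j1 = j3 then (if j0 = j2 then H j0 j1 * (p j0 * q j1) else 0) else 0 := by
      intro j3
      rw [integral_mul_const, isserlis]
      exact wick_collapse a b hab H p q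
        (fun j k h => net_rep_single_zero hd _ x₁ a ha j h)
        (fun j h => net_rep_single_zero hd θ x₂ a ha j h)
        (fun j h => net_rep_single_zero hd θ x₃ b hb j h) j0 j1 j2 j3
    simp only [e4]
    simp
  simp only [e3]
  simp
  rfl

lemma sum_layers (hd : 1 ≤ d) (θ : Param d0 d n → ℝ) (x₁ x₂ x₃ : Fin d0 → ℝ) :
    ∑ μ : Param d0 d n, ∑ ν : Param d0 d n,
      iteratedFDeriv ℝ 2 (fun θ' => net d0 d n θ' x₁) θ ![Pi.single μ 1, Pi.single ν 1] *
        fderiv ℝ (fun θ' => net d0 d n θ' x₂) θ (Pi.single μ 1) *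
        fderiv ℝ (fun θ' => net d0 d n θ' x₃) θ (Pi.single ν 1) =
    ∑ a ∈ Finset.range (d + 1), ∑ b ∈ Finset.range (d + 1), if a = b then 0 else
      ∫ ω, net d0 d n (rep a (rep b θ ω) ω) x₁ * (net d0 d n (rep a θ ω) x₂ *
      net d0 d n (rep b θ ω) x₃) ∂gpi (Param d0 d n) := by
  have h1 : ∀ a ∈ Finset.range (d + 1), ∀ b ∈ Finset.range (d + 1), (if a = b then (0 : ℝ) else
      ∫ ω, net d0 d n (rep a (rep b θ ω) ω) x₁ * (net d0 d n (rep a θ ω) x₂ *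
      net d0 d n (rep b θ ω) x₃) ∂gpi (Param d0 d n)) = ∑ μ, ∑ ν, if a = b then 0 else
        net d0 d n (rep a (rep b θ (Pi.single ν 1)) (Pi.single μ 1)) x₁ *
      (net d0 d n (rep a θ (Pi.single μ 1)) x₂ * net d0 d n (rep b θ (Pi.single ν 1)) x₃) := by
    intro a ha b hb
    split_ifs with hab
    · simp
    · exact omega_integral hd θ x₁ x₂ x₃ a b (by simp at ha; omega) (by simp at hb; omega) hab
  rw [Finset.sum_congr rfl fun a ha => Finset.sum_congr rfl fun b hb => h1 a ha b hb]
  simp_rw [Finset.sum_comm (s := Finset.range (d + 1)) (t := Finset.univ)]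
  refine Finset.sum_congr rfl fun μ _ => ?_
  refine Finset.sum_congr rfl fun ν _ => ?_
  rw [Finset.sum_eq_single (layer μ), Finset.sum_eq_single (layer ν)]
  · rw [hess_net hd, fderiv_net hd, fderiv_net hd]
    split_ifs <;> ring
  · intro b hb hne
    rw [net_rep_single_zero hd θ x₃ b (by simp at hb; omega) ν hne.symm]
    simp
  · intro h; exact absurd (layer_le ν) (by simp at h; omega)
  · intro a ha hne
    refine Finset.sum_eq_zero fun b hb => ?_
    rw [net_rep_single_zero hd θ x₂ a (by simp at ha; omega) μ hne.symm]
    simp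
  · intro h; exact absurd (layer_le μ) (by simp at h; omega)

end layers
/-! ### Two-copy parameter space -/

section copies
variable {d0 d n : ℕ}

/-- Choose a copy of the parameters depending on the layer. -/
def idx (b : ℕ → Bool) (p : Param d0 d n) : Param d0 d n ⊕ Param d0 d n :=
  if b (layer p) then Sum.inr p else Sum.inl p

/-- The mixed parameter vector. -/
def mk (b : ℕ → Bool) (z : Param d0 d n ⊕ Param d0 d n → ℝ) : Param d0 d n → ℝ :=
  fun p => z (idx b p)

lemma hidden_good (b : ℕ → Bool) (x : Fin d0 → ℝ) (m : ℕ) (i : Fin n) :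
    Good (gpi (Param d0 d n ⊕ Param d0 d n)) (fun z => hidden d0 d n (mk b z) x m i) := by
  induction m generalizing i with
  | zero =>
    simp only [hidden]
    exact Good.sum _ fun j => (Good.coord _).mul (Good.const _)
  | succ m ih =>
    simp only [hidden]
    refine Good.sum _ fun j => Good.mul ?_ (ih j)
    split_ifs
    · exact Good.coord _
    · exact Good.const _

lemma net_good (b : ℕ → Bool) (x : Fin d0 → ℝ) :
    Good (gpi (Param d0 d n ⊕ Param d0 d n)) (fun z => net d0 d n (mk b z) x) := by
  unfold net
  exact (Good.const _).mul (Good.sum _ fun j => (Good.coord _).mul (hidden_good b x _ j))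

/-- The copy pattern of the four networks. -/
def pat (a b : ℕ) : Fin 4 → ℕ → Bool :=
  ![fun l => decide (l = a) || decide (l = b), fun l => decide (l = a),
    fun l => decide (l = b), fun _ => false]

/-- Correlator contribution of a pair of layers. -/
noncomputable def corrAB (d0 d n : ℕ) (x₁ x₂ x₃ x₄ : Fin d0 → ℝ) (a b : ℕ) : ℝ :=
  ∫ z, net d0 d n (mk (pat a b 0) z) x₁ * net d0 d n (mk (pat a b 1) z) x₂ *
    (net d0 d n (mk (pat a b 2) z) x₃ * net d0 d n (mk (pat a b 3) z) x₄)
    ∂gpi (Param d0 d n ⊕ Param d0 d n)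

lemma corrAB_eq (x₁ x₂ x₃ x₄ : Fin d0 → ℝ) (a b : ℕ) :
    Integrable (fun θ => (∫ ω, net d0 d n (rep a (rep b θ ω) ω) x₁ * (net d0 d n (rep a θ ω) x₂ *
      net d0 d n (rep b θ ω) x₃) ∂gpi (Param d0 d n)) * net d0 d n θ x₄) (gpi (Param d0 d n)) ∧
    corrAB d0 d n x₁ x₂ x₃ x₄ a b =
    ∫ θ, (∫ ω, net d0 d n (rep a (rep b θ ω) ω) x₁ * (net d0 d n (rep a θ ω) x₂ *
      net d0 d n (rep b θ ω) x₃) ∂gpi (Param d0 d n)) * net d0 d n θ x₄ ∂gpi (Param d0 d n) := by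
  set F : (Param d0 d n ⊕ Param d0 d n → ℝ) → ℝ := fun z =>
    net d0 d n (mk (pat a b 0) z) x₁ * net d0 d n (mk (pat a b 1) z) x₂ *
    (net d0 d n (mk (pat a b 2) z) x₃ * net d0 d n (mk (pat a b 3) z) x₄) with hF
  have hFg : Good (gpi (Param d0 d n ⊕ Param d0 d n)) F :=
    ((net_good _ _).mul (net_good _ _)).mul ((net_good _ _).mul (net_good _ _))
  have hmp : MeasurePreserving (MeasurableEquiv.sumPiEquivProdPi
      (fun _ : Param d0 d n ⊕ Param d0 d n => ℝ)).symm
      ((gpi (Param d0 d n)).prod (gpi (Param d0 d n))) (gpi (Param d0 d n ⊕ Param d0 d n)) :=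
    measurePreserving_sumPiEquivProdPi_symm (X := fun _ : Param d0 d n ⊕ Param d0 d n => ℝ)
      (fun _ => gaussianReal 0 1)
  have hFint := (hFg.comp hmp).integrable
  have e1 : corrAB d0 d n x₁ x₂ x₃ x₄ a b = ∫ w, F ((MeasurableEquiv.sumPiEquivProdPi
      (fun _ : Param d0 d n ⊕ Param d0 d n => ℝ)).symm w)
      ∂((gpi (Param d0 d n)).prod (gpi (Param d0 d n))) :=
    (hmp.integral_comp' F).symm
  have e2 : ∀ θ ω : Param d0 d n → ℝ, F ((MeasurableEquiv.sumPiEquivProdPi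
      (fun _ : Param d0 d n ⊕ Param d0 d n => ℝ)).symm (θ, ω)) =
      (net d0 d n (rep a (rep b θ ω) ω) x₁ * (net d0 d n (rep a θ ω) x₂ *
      net d0 d n (rep b θ ω) x₃)) * net d0 d n θ x₄ := by
    intro θ ω
    have hl : ∀ p, (MeasurableEquiv.sumPiEquivProdPi
      (fun _ : Param d0 d n ⊕ Param d0 d n => ℝ)).symm (θ, ω) (Sum.inl p) = θ p := fun p => rfl
    have hr : ∀ p, (MeasurableEquiv.sumPiEquivProdPi
      (fun _ : Param d0 d n ⊕ Param d0 d n => ℝ)).symm (θ, ω) (Sum.inr p) = ω p := fun p => rfl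
    generalize (MeasurableEquiv.sumPiEquivProdPi
      (fun _ : Param d0 d n ⊕ Param d0 d n => ℝ)).symm (θ, ω) = z at hl hr
    have m0 : mk (pat a b 0) z = rep a (rep b θ ω) ω := by
      funext p
      by_cases h1 : layer p = a <;> by_cases h2 : layer p = b <;>
        simp [mk, pat, idx, rep, hl, hr, h1, h2]
    have m1 : mk (pat a b 1) z = rep a θ ω := by
      funext p
      by_cases h1 : layer p = a <;> simp [mk, pat, idx, rep, hl, hr, h1]
    have m2 : mk (pat a b 2) z = rep b θ ω := by
      funext p
      by_cases h1 : layer p = b <;> simp [mk, pat, idx, rep, hl, hr, h1]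
    have m3 : mk (pat a b 3) z = θ := by
      funext p
      simp [mk, pat, idx, hl]
    simp only [hF]
    rw [m0, m1, m2, m3]; ring
  have i1 := hFint.integral_prod_left
  rw [integral_prod _ hFint] at e1
  simp only [e2, integral_mul_const] at i1 e1
  exact ⟨i1, e1⟩

lemma corr_eq (hd : 1 ≤ d) (x₁ x₂ x₃ x₄ : Fin d0 → ℝ) :
    corrDTheta d0 d n x₁ x₂ x₃ x₄ = ∑ a ∈ Finset.range (d + 1), ∑ b ∈ Finset.range (d + 1),
      if a = b then 0 else corrAB d0 d n x₁ x₂ x₃ x₄ a b := by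
  have e0 : ∀ θ : Param d0 d n → ℝ, (∑ μ : Param d0 d n, ∑ ν : Param d0 d n,
      iteratedFDeriv ℝ 2 (fun θ' => net d0 d n θ' x₁) θ ![Pi.single μ 1, Pi.single ν 1] *
        fderiv ℝ (fun θ' => net d0 d n θ' x₂) θ (Pi.single μ 1) *
        fderiv ℝ (fun θ' => net d0 d n θ' x₃) θ (Pi.single ν 1) *
        net d0 d n θ x₄) = ∑ a ∈ Finset.range (d + 1), ∑ b ∈ Finset.range (d + 1),
        if a = b then 0 else
      (∫ ω, net d0 d n (rep a (rep b θ ω) ω) x₁ * (net d0 d n (rep a θ ω) x₂ *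
      net d0 d n (rep b θ ω) x₃) ∂gpi (Param d0 d n)) * net d0 d n θ x₄ := by
    intro θ
    simp_rw [← Finset.sum_mul]
    rw [sum_layers hd]
    simp_rw [Finset.sum_mul]
    refine Finset.sum_congr rfl fun a _ => Finset.sum_congr rfl fun b _ => ?_
    split_ifs <;> simp
  unfold corrDTheta
  simp_rw [e0]
  change ∫ θ, _ ∂(gpi (Param d0 d n)) = _
  have hi : ∀ a b : ℕ, Integrable (fun θ : Param d0 d n → ℝ => if a = b then 0 else
      (∫ ω, net d0 d n (rep a (rep b θ ω) ω) x₁ * (net d0 d n (rep a θ ω) x₂ *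
      net d0 d n (rep b θ ω) x₃) ∂gpi (Param d0 d n)) * net d0 d n θ x₄) (gpi (Param d0 d n)) := by
    intro a b
    split_ifs
    · exact integrable_zero _ _ _
    · exact (corrAB_eq x₁ x₂ x₃ x₄ a b).1
  rw [integral_finsetSum _ fun a _ => integrable_finsetSum _ fun b _ => hi a b]
  refine Finset.sum_congr rfl fun a _ => ?_
  rw [integral_finsetSum _ fun b _ => hi a b]
  refine Finset.sum_congr rfl fun b _ => ?_
  split_ifs
  · simp
  · exact (corrAB_eq x₁ x₂ x₃ x₄ a b).2.symm

end copies
/-! ### Transfer recursion -/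

section transfer

/-- Combination of the three pairing tensors. -/
def D {I : Type} [DecidableEq I] (α β γ : ℝ) (i0 i1 i2 i3 : I) : ℝ :=
  (if i0 = i1 ∧ i2 = i3 then α else 0) + (if i0 = i2 ∧ i1 = i3 then β else 0)
    + (if i0 = i3 ∧ i1 = i2 then γ else 0)

/-- Indicators of the allowed pairings. -/
def pc (c : Fin 4 → Bool) : ℝ := if c 0 = c 1 ∧ c 2 = c 3 then 1 else 0
/-- Second pairing. -/
def qc (c : Fin 4 → Bool) : ℝ := if c 0 = c 2 ∧ c 1 = c 3 then 1 else 0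
/-- Third pairing. -/
def rc (c : Fin 4 → Bool) : ℝ := if c 0 = c 3 ∧ c 1 = c 2 then 1 else 0

lemma ite_split (P P' Q Q' R R' : Prop) [Decidable P] [Decidable P'] [Decidable Q]
    [Decidable Q'] [Decidable R] [Decidable R'] (t : ℝ) :
    (if ((P ∧ Q) ∧ R) ∧ ((P' ∧ Q') ∧ R') then (1 : ℝ) else 0) * t =
    (if P ∧ P' then (if R ∧ R' then 1 else 0) else 0) *
      (if Q then (if Q' then t else 0) else 0) := by
  by_cases hP : P
  · by_cases hP' : P'
    · by_cases hQ : Q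
      · by_cases hQ' : Q'
        · simp only [hP, hP', hQ, hQ', true_and, and_true, if_true]
        · simp only [hQ', and_false, false_and, if_false, ite_self, zero_mul, mul_zero]
      · simp only [hQ, and_false, false_and, if_false, ite_self, zero_mul, mul_zero]
    · simp only [hP', and_false, false_and, if_false, zero_mul]
  · simp only [hP, false_and, if_false, zero_mul]

lemma ite_split_swap (P P' Q Q' R R' : Prop) [Decidable P] [Decidable P'] [Decidable Q]
    [Decidable Q'] [Decidable R] [Decidable R'] (t : ℝ) :
    (if ((P ∧ Q) ∧ R) ∧ ((P' ∧ Q') ∧ R') then (1 : ℝ) else 0) * t =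
    (if P ∧ P' then (if R ∧ R' then 1 else 0) else 0) *
      (if Q' then (if Q then t else 0) else 0) := by
  by_cases hP : P
  · by_cases hP' : P'
    · by_cases hQ : Q
      · by_cases hQ' : Q'
        · simp only [hP, hP', hQ, hQ', true_and, and_true, if_true]
        · simp only [hQ', and_false, false_and, if_false, ite_self, zero_mul, mul_zero]
      · simp only [hQ, and_false, false_and, if_false, ite_self, zero_mul, mul_zero]
    · simp only [hP', and_false, false_and, if_false, zero_mul]
  · simp only [hP, false_and, if_false, zero_mul]

lemma contract {I J κ : Type} [DecidableEq I] [DecidableEq J] [Fintype J] [DecidableEq κ]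
    (E : Fin 4 → I × J → κ) (c : Fin 4 → Bool)
    (hE : ∀ k l u w, E k u = E l w ↔ u = w ∧ c k = c l) (T : J → J → J → J → ℝ)
    (i0 i1 i2 i3 : I) :
    ∑ j0, ∑ j1, ∑ j2, ∑ j3, wick (E 0 (i0, j0)) (E 1 (i1, j1)) (E 2 (i2, j2)) (E 3 (i3, j3)) *
      T j0 j1 j2 j3 =
    D (pc c * ∑ j, ∑ k, T j j k k) (qc c * ∑ j, ∑ k, T j k j k) (rc c * ∑ j, ∑ k, T j k k j)
      i0 i1 i2 i3 := by
  have e : ∀ j0 j1 j2 j3, wick (E 0 (i0, j0)) (E 1 (i1, j1)) (E 2 (i2, j2)) (E 3 (i3, j3)) *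
      T j0 j1 j2 j3 =
      (if i0 = i1 ∧ i2 = i3 then pc c else 0) *
        (if j0 = j1 then (if j2 = j3 then T j0 j1 j2 j3 else 0) else 0) +
      (if i0 = i2 ∧ i1 = i3 then qc c else 0) *
        (if j0 = j2 then (if j1 = j3 then T j0 j1 j2 j3 else 0) else 0) +
      (if i0 = i3 ∧ i1 = i2 then rc c else 0) *
        (if j1 = j2 then (if j0 = j3 then T j0 j1 j2 j3 else 0) else 0) := by
    intro j0 j1 j2 j3
    unfold wick
    simp only [hE, Prod.mk.injEq, add_mul]
    rw [ite_split, ite_split, ite_split_swap]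
    rfl
  simp_rw [e, Finset.sum_add_distrib, ← Finset.mul_sum]
  unfold D
  congr 1
  · congr 1
    · simp [Finset.sum_ite_eq, Finset.sum_ite_irrel]
    · simp [Finset.sum_ite_eq, Finset.sum_ite_irrel]
  · simp [Finset.sum_ite_eq, Finset.sum_ite_irrel]

lemma D_contract12 {n : ℕ} (α β γ : ℝ) :
    ∑ j : Fin n, ∑ k : Fin n, D α β γ j j k k = n ^ 2 * α + n * β + n * γ := by
  simp [D, Finset.sum_add_distrib]; ring

lemma D_contract13 {n : ℕ} (α β γ : ℝ) :
    ∑ j : Fin n, ∑ k : Fin n, D α β γ j k j k = n * α + n ^ 2 * β + n * γ := by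
  have : ∀ j k : Fin n, D α β γ j k j k =
      (if j = k then α else 0) + β + (if j = k then γ else 0) := by
    intro j k; by_cases h : j = k
    · subst h; simp [D]
    · simp [D, h]
  simp [this, Finset.sum_add_distrib]; ring

lemma D_contract14 {n : ℕ} (α β γ : ℝ) :
    ∑ j : Fin n, ∑ k : Fin n, D α β γ j k k j = n * α + n * β + n ^ 2 * γ := by
  have : ∀ j k : Fin n, D α β γ j k k j =
      (if j = k then α else 0) + (if j = k then β else 0) + γ := by
    intro j k; by_cases h : j = k
    · subst h; simp [D]
    · have h' : ¬ k = j := fun e => h e.symm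
      simp [D, h, h']
  simp [this, Finset.sum_add_distrib]; ring

/-- Size bounds on the state. -/
def Bd (a b m : ℕ) (n K α β γ : ℝ) : Prop :=
  |α| ≤ K * n ^ (2 * m) ∧ |β| ≤ K * n ^ (2 * m) ∧ |γ| ≤ K * n ^ (2 * m) ∧
  (b ≤ m → n * |α| ≤ K * n ^ (2 * m)) ∧ (a ≤ m → n * |β| ≤ K * n ^ (2 * m)) ∧
  (a ≤ m ∨ b ≤ m → n * |γ| ≤ K * n ^ (2 * m))

lemma abs3 (n α β γ p : ℝ) (hn : 1 ≤ n) (hp0 : 0 ≤ p) (hp1 : p ≤ 1) :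
    |p * (n ^ 2 * α + n * β + n * γ)| ≤ n ^ 2 * |α| + n * |β| + n * |γ| := by
  rw [abs_mul, abs_of_nonneg hp0]
  have h1 : |n ^ 2 * α + n * β + n * γ| ≤ n ^ 2 * |α| + n * |β| + n * |γ| := by
    refine (abs_add_three _ _ _).trans (le_of_eq ?_)
    rw [abs_mul, abs_mul, abs_mul, abs_of_nonneg (by positivity : (0 : ℝ) ≤ n ^ 2),
      abs_of_nonneg (by positivity : (0 : ℝ) ≤ n)]
  have h2 : p * |n ^ 2 * α + n * β + n * γ| ≤ 1 * |n ^ 2 * α + n * β + n * γ| :=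
    mul_le_mul_of_nonneg_right hp1 (abs_nonneg _)
  linarith

/-- Bounds for one coefficient of the next state. -/
lemma coef_bound (n α β γ p N : ℝ) (hn : 1 ≤ n) (hp0 : 0 ≤ p) (hp1 : p ≤ 1)
    (hα : |α| ≤ N) (hβ : |β| ≤ N) (hγ : |γ| ≤ N) :
    |p * (n ^ 2 * α + n * β + n * γ)| ≤ 3 * N * n ^ 2 ∧
    (n * |α| ≤ N → n * |p * (n ^ 2 * α + n * β + n * γ)| ≤ 3 * N * n ^ 2) := by
  have h := abs3 n α β γ p hn hp0 hp1
  have hN : 0 ≤ N := (abs_nonneg _).trans hα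
  have hn0 : 0 ≤ n := by linarith
  have a1 : n ^ 2 * |α| ≤ n ^ 2 * N := by gcongr
  have b1 : n * |β| ≤ n * N := by gcongr
  have c1 : n * |γ| ≤ n * N := by gcongr
  have hnn : n * N ≤ n ^ 2 * N := by
    have : n ≤ n ^ 2 := by nlinarith
    gcongr
  refine ⟨by linarith, fun h1 => ?_⟩
  have h2 : n * |p * (n ^ 2 * α + n * β + n * γ)| ≤
      n * (n ^ 2 * |α| + n * |β| + n * |γ|) := by gcongr
  have h3 : n ^ 2 * (n * |α|) ≤ n ^ 2 * N := by gcongr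
  have h4 : n * (n * |β|) ≤ n * (n * N) := by gcongr
  have h5 : n * (n * |γ|) ≤ n * (n * N) := by gcongr
  nlinarith

lemma Bd_step (a b m : ℕ) (n K α β γ p q r : ℝ) (hn : 1 ≤ n)
    (hp0 : 0 ≤ p) (hp1 : p ≤ 1) (hq0 : 0 ≤ q) (hq1 : q ≤ 1) (hr0 : 0 ≤ r) (hr1 : r ≤ 1)
    (hp : b = m + 1 → p = 0) (hq : a = m + 1 → q = 0) (hr : a = m + 1 ∨ b = m + 1 → r = 0)
    (h : Bd a b m n K α β γ) :
    Bd a b (m + 1) n (3 * K) (p * (n ^ 2 * α + n * β + n * γ))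
      (q * (n * α + n ^ 2 * β + n * γ)) (r * (n * α + n * β + n ^ 2 * γ)) := by
  obtain ⟨h1, h2, h3, h4, h5, h6⟩ := h
  have e : 3 * K * n ^ (2 * (m + 1)) = 3 * (K * n ^ (2 * m)) * n ^ 2 := by ring
  have hK : 0 ≤ K * n ^ (2 * m) := (abs_nonneg _).trans h1
  have hR : 0 ≤ 3 * (K * n ^ (2 * m)) * n ^ 2 := by positivity
  obtain ⟨A1, A2⟩ := coef_bound n α β γ p _ hn hp0 hp1 h1 h2 h3
  obtain ⟨B1, B2⟩ := coef_bound n β α γ q _ hn hq0 hq1 h2 h1 h3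
  obtain ⟨C1, C2⟩ := coef_bound n γ α β r _ hn hr0 hr1 h3 h1 h2
  have eB : n * α + n ^ 2 * β + n * γ = n ^ 2 * β + n * α + n * γ := by ring
  have eC : n * α + n * β + n ^ 2 * γ = n ^ 2 * γ + n * α + n * β := by ring
  unfold Bd
  rw [e, eB, eC]
  refine ⟨A1, B1, C1, fun hb => ?_, fun ha => ?_, fun hab => ?_⟩
  · by_cases hbm : b = m + 1
    · rw [hp hbm]; simpa using hR
    · exact A2 (h4 (by omega))
  · by_cases hbm : a = m + 1
    · rw [hq hbm]; simpa using hR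
    · exact B2 (h5 (by omega))
  · by_cases hbm : a = m + 1 ∨ b = m + 1
    · rw [hr hbm]; simpa using hR
    · exact C2 (h6 (by omega))

variable {d0 d n : ℕ}

lemma idx_eq (b b' : ℕ → Bool) (p p' : Param d0 d n) :
    idx b p = idx b' p' ↔ p = p' ∧ b (layer p) = b' (layer p') := by
  unfold idx
  by_cases h : p = p'
  · subst h
    cases b (layer p) <;> cases b' (layer p) <;> simp
  · cases b (layer p) <;> cases b' (layer p') <;> simp [h]

/-- Parameters of a given layer in either copy. -/
def layerSet (d0 d n l : ℕ) : Set (Param d0 d n ⊕ Param d0 d n) :=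
  {i | Sum.elim layer layer i = l}

lemma idx_mem (b : ℕ → Bool) (p : Param d0 d n) : idx b p ∈ layerSet d0 d n (layer p) := by
  unfold idx layerSet
  split_ifs <;> simp

lemma hidden_indep (b : ℕ → Bool) (x : Fin d0 → ℝ) (m l : ℕ) (hl : m < l)
    (z z' : Param d0 d n ⊕ Param d0 d n → ℝ) (h : ∀ i ∉ layerSet d0 d n l, z i = z' i) :
    hidden d0 d n (mk b z) x m = hidden d0 d n (mk b z') x m := by
  refine hidden_congr_s9 _ _ _ _ fun p hp => h _ fun hmem => ?_
  have h2 : Sum.elim layer layer (idx b p) = layer p := idx_mem b p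
  have h3 : Sum.elim layer layer (idx b p) = l := hmem
  omega

/-- Fourth-order moment of hidden states. -/
noncomputable def TT (d0 d n : ℕ) (B : Fin 4 → ℕ → Bool) (X : Fin 4 → Fin d0 → ℝ) (m : ℕ)
    (i0 i1 i2 i3 : Fin n) : ℝ :=
  ∫ z, hidden d0 d n (mk (B 0) z) (X 0) m i0 * hidden d0 d n (mk (B 1) z) (X 1) m i1 *
    (hidden d0 d n (mk (B 2) z) (X 2) m i2 * hidden d0 d n (mk (B 3) z) (X 3) m i3)
    ∂gpi (Param d0 d n ⊕ Param d0 d n)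

lemma TT_zero (B : Fin 4 → ℕ → Bool) (X : Fin 4 → Fin d0 → ℝ) (i0 i1 i2 i3 : Fin n) :
    TT d0 d n B X 0 i0 i1 i2 i3 =
      D (pc (fun k => B k 0) * ∑ j, ∑ k, X 0 j * X 1 j * (X 2 k * X 3 k))
        (qc (fun k => B k 0) * ∑ j, ∑ k, X 0 j * X 1 k * (X 2 j * X 3 k))
        (rc (fun k => B k 0) * ∑ j, ∑ k, X 0 j * X 1 k * (X 2 k * X 3 j)) i0 i1 i2 i3 := by
  have h1 := layer_step (κ := Param d0 d n ⊕ Param d0 d n) (J := Fin d0) (layerSet d0 d n 0)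
    (fun k j => idx (B k) (.inr (.inl (![i0, i1, i2, i3] k, j))))
    (fun k j _ => X k j) (fun k j => idx_mem _ _) (fun k j => Good.const _)
    (fun _ _ _ _ _ => rfl)
  have h2 := contract (fun (k : Fin 4) (u : Fin n × Fin d0) =>
    idx (d := d) (B k) (.inr (.inl u))) (fun k => B k 0) (fun k l u w => by
      rw [idx_eq]; simp [layer]) (fun j0 j1 j2 j3 => X 0 j0 * X 1 j1 * (X 2 j2 * X 3 j3))
      i0 i1 i2 i3
  rw [← h2]
  simp only [integral_const, smul_eq_mul, probReal_univ, one_mul] at h1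
  exact h1

lemma TT_succ (B : Fin 4 → ℕ → Bool) (X : Fin 4 → Fin d0 → ℝ) (m : ℕ) (hm : m < d - 1)
    (i0 i1 i2 i3 : Fin n) :
    TT d0 d n B X (m + 1) i0 i1 i2 i3 =
      D (pc (fun k => B k (m + 1)) * ∑ j, ∑ k, TT d0 d n B X m j j k k)
        (qc (fun k => B k (m + 1)) * ∑ j, ∑ k, TT d0 d n B X m j k j k)
        (rc (fun k => B k (m + 1)) * ∑ j, ∑ k, TT d0 d n B X m j k k j) i0 i1 i2 i3 := by
  have h1 := layer_step (κ := Param d0 d n ⊕ Param d0 d n) (J := Fin n) (layerSet d0 d n (m + 1))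
    (fun k j => idx (B k) (.inr (.inr (⟨m, hm⟩, ![i0, i1, i2, i3] k, j))))
    (fun k j z => hidden d0 d n (mk (B k) z) (X k) m j) (fun k j => idx_mem _ _)
    (fun k j => hidden_good _ _ _ _)
    (fun k j z z' h => by rw [hidden_indep (B k) (X k) m (m + 1) (by omega) z z' h])
  have h2 := contract (fun (k : Fin 4) (u : Fin n × Fin n) =>
    idx (d0 := d0) (d := d) (B k) (.inr (.inr (⟨m, hm⟩, u)))) (fun k => B k (m + 1))
    (fun k l u w => by rw [idx_eq]; simp [layer]) (TT d0 d n B X m) i0 i1 i2 i3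
  rw [← h2]
  refine Eq.trans ?_ h1
  unfold TT
  simp only [hidden, dif_pos hm]
  rfl

lemma TT_final (hd : 1 ≤ d) (B : Fin 4 → ℕ → Bool) (X : Fin 4 → Fin d0 → ℝ) :
    ∫ z, (∑ i : Fin n, mk (B 0) z (.inl i) * hidden d0 d n (mk (B 0) z) (X 0) (d - 1) i) *
      (∑ i : Fin n, mk (B 1) z (.inl i) * hidden d0 d n (mk (B 1) z) (X 1) (d - 1) i) *
      ((∑ i : Fin n, mk (B 2) z (.inl i) * hidden d0 d n (mk (B 2) z) (X 2) (d - 1) i) *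
      (∑ i : Fin n, mk (B 3) z (.inl i) * hidden d0 d n (mk (B 3) z) (X 3) (d - 1) i))
      ∂gpi (Param d0 d n ⊕ Param d0 d n) =
      pc (fun k => B k d) * ∑ j, ∑ k, TT d0 d n B X (d - 1) j j k k +
        qc (fun k => B k d) * ∑ j, ∑ k, TT d0 d n B X (d - 1) j k j k +
        rc (fun k => B k d) * ∑ j, ∑ k, TT d0 d n B X (d - 1) j k k j := by
  have h1 := layer_step (κ := Param d0 d n ⊕ Param d0 d n) (J := Fin n) (layerSet d0 d n d)
    (fun k j => idx (B k) (.inl j))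
    (fun k j z => hidden d0 d n (mk (B k) z) (X k) (d - 1) j) (fun k j => idx_mem _ _)
    (fun k j => hidden_good _ _ _ _)
    (fun k j z z' h => by rw [hidden_indep (B k) (X k) (d - 1) d (by omega) z z' h])
  have h2 := contract (I := Unit) (fun (k : Fin 4) (u : Unit × Fin n) =>
    idx (d0 := d0) (d := d) (B k) (.inl u.2)) (fun k => B k d)
    (fun k l u w => by rw [idx_eq]; simp [layer, Prod.ext_iff]) (TT d0 d n B X (d - 1)) () () () ()
  simp only [D, and_self, if_true] at h2
  rw [← h2]
  exact h1

lemma pat_props (a b l : ℕ) :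
    (b = l → a ≠ b → pc (fun k => pat a b k l) = 0) ∧
    (a = l → a ≠ b → qc (fun k => pat a b k l) = 0) ∧
    (a = l ∨ b = l → a ≠ b → rc (fun k => pat a b k l) = 0) := by
  refine ⟨?_, ?_, ?_⟩
  · rintro rfl hab
    simp [pc, pat, hab.symm]
  · rintro rfl hab
    simp [qc, pat, hab]
  · rintro (rfl | rfl) hab
    · simp [rc, pat]
    · simp [rc, pat]

lemma pqr_range (c : Fin 4 → Bool) : (0 ≤ pc c ∧ pc c ≤ 1) ∧ (0 ≤ qc c ∧ qc c ≤ 1) ∧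
    (0 ≤ rc c ∧ rc c ≤ 1) := by
  unfold pc qc rc
  refine ⟨?_, ?_, ?_⟩ <;> split_ifs <;> norm_num

/-- The constant. -/
noncomputable def K0 (X : Fin 4 → Fin d0 → ℝ) : ℝ :=
  |∑ j, ∑ k, X 0 j * X 1 j * (X 2 k * X 3 k)| + |∑ j, ∑ k, X 0 j * X 1 k * (X 2 j * X 3 k)| +
    |∑ j, ∑ k, X 0 j * X 1 k * (X 2 k * X 3 j)|

lemma TT_bound (X : Fin 4 → Fin d0 → ℝ) (a b : ℕ) (hab : a ≠ b) (hn : 1 ≤ n) (m : ℕ)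
    (hm : m ≤ d - 1) : ∃ α β γ : ℝ, Bd a b m n (3 ^ m * K0 X) α β γ ∧
      ∀ i0 i1 i2 i3 : Fin n, TT d0 d n (pat a b) X m i0 i1 i2 i3 = D α β γ i0 i1 i2 i3 := by
  induction m with
  | zero =>
    refine ⟨_, _, _, ?_, fun i0 i1 i2 i3 => TT_zero _ _ _ _ _ _⟩
    obtain ⟨⟨p0, p1⟩, ⟨q0, q1⟩, ⟨r0, r1⟩⟩ := pqr_range (fun k => pat a b k 0)
    obtain ⟨h1, h2, h3⟩ := pat_props a b 0
    have hK : 0 ≤ K0 X := by unfold K0; positivity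
    have aux : ∀ p A : ℝ, 0 ≤ p → p ≤ 1 → |A| ≤ K0 X → |p * A| ≤ K0 X := by
      intro p A hp0 hp1 hA
      rw [abs_mul, abs_of_nonneg hp0]
      nlinarith [abs_nonneg A]
    unfold Bd
    simp only [pow_zero, one_mul, mul_zero, mul_one]
    refine ⟨aux _ _ p0 p1 ?_, aux _ _ q0 q1 ?_, aux _ _ r0 r1 ?_, fun h => ?_, fun h => ?_,
      fun h => ?_⟩
    · unfold K0; linarith [abs_nonneg (∑ j, ∑ k, X 0 j * X 1 k * (X 2 j * X 3 k)),
        abs_nonneg (∑ j, ∑ k, X 0 j * X 1 k * (X 2 k * X 3 j))]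
    · unfold K0; linarith [abs_nonneg (∑ j, ∑ k, X 0 j * X 1 j * (X 2 k * X 3 k)),
        abs_nonneg (∑ j, ∑ k, X 0 j * X 1 k * (X 2 k * X 3 j))]
    · unfold K0; linarith [abs_nonneg (∑ j, ∑ k, X 0 j * X 1 k * (X 2 j * X 3 k)),
        abs_nonneg (∑ j, ∑ k, X 0 j * X 1 j * (X 2 k * X 3 k))]
    · rw [h1 (by omega) hab]; simpa using hK
    · rw [h2 (by omega) hab]; simpa using hK
    · rw [h3 (by omega) hab]; simpa using hK
  | succ m ih =>
    obtain ⟨α, β, γ, hB, hT⟩ := ih (by omega)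
    obtain ⟨⟨p0, p1⟩, ⟨q0, q1⟩, ⟨r0, r1⟩⟩ := pqr_range (fun k => pat a b k (m + 1))
    obtain ⟨h1, h2, h3⟩ := pat_props a b (m + 1)
    have hs := Bd_step a b m n _ α β γ _ _ _ (by exact_mod_cast hn) p0 p1 q0 q1 r0 r1
      (fun h => h1 h hab) (fun h => h2 h hab) (fun h => h3 h hab) hB
    refine ⟨_, _, _, ?_, fun i0 i1 i2 i3 => TT_succ _ _ m (by omega) _ _ _ _⟩
    simp only [hT, D_contract12, D_contract13, D_contract14]
    rw [pow_succ', mul_assoc]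
    exact hs

lemma corrAB_bound (hd0 : 0 < d0) (hd : 1 ≤ d) (hn : 1 ≤ n) (x₁ x₂ x₃ x₄ : Fin d0 → ℝ) (a b : ℕ)
    (ha : a ≤ d) (hb : b ≤ d) (hab : a ≠ b) :
    |corrAB d0 d n x₁ x₂ x₃ x₄ a b| ≤ 3 * (3 ^ d * K0 ![x₁, x₂, x₃, x₄]) / n := by
  set X : Fin 4 → Fin d0 → ℝ := ![x₁, x₂, x₃, x₄] with hX
  obtain ⟨α, β, γ, hB, hT⟩ := TT_bound (d := d) X a b hab hn (d - 1) le_rfl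
  obtain ⟨⟨p0, p1⟩, ⟨q0, q1⟩, ⟨r0, r1⟩⟩ := pqr_range (fun k => pat a b k (d - 1 + 1))
  obtain ⟨h1, h2, h3⟩ := pat_props a b (d - 1 + 1)
  have hs := Bd_step a b (d - 1) n _ α β γ _ _ _ (by exact_mod_cast hn) p0 p1 q0 q1 r0 r1
      (fun h => h1 h hab) (fun h => h2 h hab) (fun h => h3 h hab) hB
  have hF := TT_final (n := n) hd (pat a b) X
  simp only [hT, D_contract12, D_contract13, D_contract14] at hF
  rw [← mul_assoc, ← pow_succ', Nat.sub_add_cancel hd] at hs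
  obtain ⟨-, -, -, s1, s2, s3⟩ := hs
  specialize s1 hb
  specialize s2 ha
  specialize s3 (Or.inl ha)
  set c : ℝ := (Real.sqrt ((n : ℝ) ^ d * (d0 : ℝ)))⁻¹ with hc
  have hn0 : (0 : ℝ) < n := by exact_mod_cast hn
  have hd0' : (1 : ℝ) ≤ d0 := by exact_mod_cast hd0
  have hc2 : c ^ 2 = ((n : ℝ) ^ d * d0)⁻¹ := by
    rw [hc, inv_pow, Real.sq_sqrt (by positivity)]
  have hc4 : c ^ 4 * (n : ℝ) ^ (2 * d) ≤ 1 := by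
    have : c ^ 4 = (c ^ 2) ^ 2 := by ring
    rw [this, hc2, mul_inv, mul_pow]
    have e : (((n : ℝ) ^ d)⁻¹) ^ 2 * ((d0 : ℝ)⁻¹) ^ 2 * (n : ℝ) ^ (2 * d) = ((d0 : ℝ)⁻¹) ^ 2 := by
      field_simp
      ring
    rw [e]
    exact pow_le_one₀ (by positivity) (inv_le_one_of_one_le₀ hd0')
  have hC : corrAB d0 d n x₁ x₂ x₃ x₄ a b = c ^ 4 *
      (pc (fun k => pat a b k d) * ((n : ℝ) ^ 2 * α + n * β + n * γ) +
        qc (fun k => pat a b k d) * ((n : ℝ) * α + n ^ 2 * β + n * γ) +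
        rc (fun k => pat a b k d) * ((n : ℝ) * α + n * β + n ^ 2 * γ)) := by
    rw [← hF, ← integral_const_mul]
    unfold corrAB net
    refine integral_congr_ae (.of_forall fun z => ?_)
    simp only [hX, Matrix.cons_val_zero, Matrix.cons_val_one, Matrix.cons_val]
    ring
  have hK : 0 ≤ K0 X := by unfold K0; positivity
  rw [hC, le_div_iff₀ hn0, abs_mul, abs_of_nonneg (by positivity : 0 ≤ c ^ 4)]
  set P := pc (fun k => pat a b k d) * ((n : ℝ) ^ 2 * α + n * β + n * γ)
  set Q := qc (fun k => pat a b k d) * ((n : ℝ) * α + n ^ 2 * β + n * γ)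
  set R := rc (fun k => pat a b k d) * ((n : ℝ) * α + n * β + n ^ 2 * γ)
  have habs : |P + Q + R| ≤ |P| + |Q| + |R| := abs_add_three _ _ _
  have h5 : n * |P + Q + R| ≤ 3 * (3 ^ d * K0 X) * (n : ℝ) ^ (2 * d) := by
    have : n * |P + Q + R| ≤ n * (|P| + |Q| + |R|) := by gcongr
    linarith
  calc c ^ 4 * |P + Q + R| * n = c ^ 4 * (n * |P + Q + R|) := by ring
    _ ≤ c ^ 4 * (3 * (3 ^ d * K0 X) * (n : ℝ) ^ (2 * d)) := by gcongr
    _ = 3 * (3 ^ d * K0 X) * (c ^ 4 * (n : ℝ) ^ (2 * d)) := by ring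
    _ ≤ 3 * (3 ^ d * K0 X) * 1 := by gcongr
    _ = _ := by ring

end transfer

/-- the correlation function appearing in `E_θ[dΘ/dt]` for a deep linear
fully connected network is `O(1/n)`. -/
theorem deep_linear_fc_dNTK_correlator (d0 d : ℕ) (hd0 : 0 < d0) (hd : 1 ≤ d)
    (x₁ x₂ x₃ x₄ : Fin d0 → ℝ) :
    ∃ K : ℝ, ∀ n : ℕ, 1 ≤ n →
      |corrDTheta d0 d n x₁ x₂ x₃ x₄| ≤ K / (n : ℝ) := by
  refine ⟨∑ a ∈ Finset.range (d + 1), ∑ b ∈ Finset.range (d + 1),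
    3 * (3 ^ d * K0 ![x₁, x₂, x₃, x₄]), fun n hn => ?_⟩
  rw [corr_eq hd, Finset.sum_div]
  refine (Finset.abs_sum_le_sum_abs _ _).trans (Finset.sum_le_sum fun a ha => ?_)
  rw [Finset.sum_div]
  refine (Finset.abs_sum_le_sum_abs _ _).trans (Finset.sum_le_sum fun b hb => ?_)
  simp only [Finset.mem_range] at ha hb
  split_ifs with hab
  · have hK : 0 ≤ K0 ![x₁, x₂, x₃, x₄] := by unfold K0; positivity
    rw [abs_zero]; positivity
  · exact corrAB_bound hd0 hd hn x₁ x₂ x₃ x₄ a b (by omega) (by omega) hab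

end DeepLinearFC
end

section
/- Let f be a one-hidden-layer network of width n with smooth activation σ such that σ and all its derivatives are polynomially bounded, and let Θ be its neural tangent kernel. Then for all fixed inputs x, x' ∈ ℝ^{d_0} there exists a constant K (depending on σ, d_0, x, x' but not on n) such that Var_θ[Θ(x,x')] = E_θ[Θ(x,x')^2] − (E_θ[Θ(x,x')])^2 ≤ K / n for all n ≥ 1. -/
open MeasureTheory ProbabilityTheory

namespace OneHiddenLayer

/-- Parameter index type for a one-hidden-layer network of width `n` on inputs in `ℝ^{d0}`:
the input weight vectors `w_i` (`Fin n × Fin d0`) and the readout weights `v_i` (`Fin n`). -/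
abbrev Param (d0 n : ℕ) : Type := (Fin n × Fin d0) ⊕ Fin n

/-- The one-hidden-layer network `f(x) = n^{-1/2} Σ_i v_i σ(d0^{-1/2} w_i ⬝ x)`. -/
noncomputable def net (σ : ℝ → ℝ) (d0 n : ℕ) (θ : Param d0 n → ℝ) (x : Fin d0 → ℝ) : ℝ :=
  (Real.sqrt (n : ℝ))⁻¹ * ∑ i : Fin n, θ (.inr i) *
    σ ((Real.sqrt (d0 : ℝ))⁻¹ * ∑ j : Fin d0, θ (.inl (i, j)) * x j)

/-- All parameters are i.i.d. standard Gaussians. -/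
noncomputable def gaussParam (d0 n : ℕ) : Measure (Param d0 n → ℝ) :=
  Measure.pi fun _ => gaussianReal 0 1

/-- A single standard Gaussian vector `w ∼ N(0, I_{d0})`. -/
noncomputable def gaussVec (d0 : ℕ) : Measure (Fin d0 → ℝ) :=
  Measure.pi fun _ => gaussianReal 0 1

/-- The neural tangent kernel `Θ(x,x') = Σ_μ ∂f(x)/∂θ_μ ⬝ ∂f(x')/∂θ_μ`. -/
noncomputable def NTK (σ : ℝ → ℝ) (d0 n : ℕ) (θ : Param d0 n → ℝ) (x x' : Fin d0 → ℝ) : ℝ :=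
  ∑ μ : Param d0 n,
    fderiv ℝ (fun θ' => net σ d0 n θ' x) θ (Pi.single μ 1) *
    fderiv ℝ (fun θ' => net σ d0 n θ' x') θ (Pi.single μ 1)

/-- Explicit partial derivatives: readout weights. -/
theorem net_hasFDerivAt (σ : ℝ → ℝ) (hσ : Differentiable ℝ σ) (d0 n : ℕ)
    (θ : Param d0 n → ℝ) (x : Fin d0 → ℝ) :
    HasFDerivAt (fun θ' => net σ d0 n θ' x)
      ((Real.sqrt (n : ℝ))⁻¹ • ∑ i : Fin n,
        (θ (.inr i) • (deriv σ ((Real.sqrt (d0 : ℝ))⁻¹ * ∑ j : Fin d0, θ (.inl (i, j)) * x j) •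
          ((Real.sqrt (d0 : ℝ))⁻¹ • ∑ j : Fin d0, x j •
            (ContinuousLinearMap.proj (R := ℝ) (φ := fun _ : Param d0 n => ℝ) (.inl (i, j))))) +
          σ ((Real.sqrt (d0 : ℝ))⁻¹ * ∑ j : Fin d0, θ (.inl (i, j)) * x j) •
            (ContinuousLinearMap.proj (R := ℝ) (φ := fun _ : Param d0 n => ℝ) (.inr i)))) θ := by
  unfold net
  refine HasFDerivAt.const_mul (HasFDerivAt.fun_sum fun i _ => ?_) _
  refine HasFDerivAt.mul (hasFDerivAt_apply _ θ) ?_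
  refine HasDerivAt.comp_hasFDerivAt θ (hσ _).hasDerivAt ?_
  refine HasFDerivAt.const_mul (HasFDerivAt.fun_sum fun j _ => ?_) _
  exact (hasFDerivAt_apply _ θ).mul_const (x j)

/-- The single-neuron contribution. -/
noncomputable def neuron (σ : ℝ → ℝ) (d0 : ℕ) (x x' : Fin d0 → ℝ)
    (z : Option (Fin d0) → ℝ) : ℝ :=
  σ ((Real.sqrt (d0 : ℝ))⁻¹ * ∑ j : Fin d0, z (some j) * x j) *
    σ ((Real.sqrt (d0 : ℝ))⁻¹ * ∑ j : Fin d0, z (some j) * x' j) +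
  z none * z none *
    (deriv σ ((Real.sqrt (d0 : ℝ))⁻¹ * ∑ j : Fin d0, z (some j) * x j) *
    deriv σ ((Real.sqrt (d0 : ℝ))⁻¹ * ∑ j : Fin d0, z (some j) * x' j)) *
    (((Real.sqrt (d0 : ℝ))⁻¹) ^ 2 * ∑ j, x j * x' j)

/-- Index embedding of block `i`. -/
def blk (d0 n : ℕ) (i : Fin n) : Option (Fin d0) → Param d0 n
  | none => .inr i
  | some j => .inl (i, j)

theorem blk_injective (d0 n : ℕ) (i : Fin n) : Function.Injective (blk d0 n i) := by
  intro a b h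
  cases a <;> cases b <;> simp_all [blk]

theorem NTK_eq (σ : ℝ → ℝ) (hσ : Differentiable ℝ σ) (d0 n : ℕ)
    (θ : Param d0 n → ℝ) (x x' : Fin d0 → ℝ) :
    NTK σ d0 n θ x x' = (n : ℝ)⁻¹ * ∑ i : Fin n, neuron σ d0 x x' (fun o => θ (blk d0 n i o)) := by
  have hs : (Real.sqrt (n : ℝ))⁻¹ * (Real.sqrt (n : ℝ))⁻¹ = (n : ℝ)⁻¹ := by
    rw [← mul_inv, Real.mul_self_sqrt (Nat.cast_nonneg n)]
  have hr : ∀ (y : Fin d0 → ℝ) (k : Fin n),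
      fderiv ℝ (fun θ' => net σ d0 n θ' y) θ (Pi.single (.inr k) 1) =
      (Real.sqrt (n : ℝ))⁻¹ *
        σ ((Real.sqrt (d0 : ℝ))⁻¹ * ∑ j : Fin d0, θ (.inl (k, j)) * y j) := by
    intro y k
    rw [(net_hasFDerivAt σ hσ d0 n θ y).fderiv]
    simp [Pi.single_apply]
  have hl : ∀ (y : Fin d0 → ℝ) (k : Fin n) (l : Fin d0),
      fderiv ℝ (fun θ' => net σ d0 n θ' y) θ (Pi.single (.inl (k, l)) 1) =
      (Real.sqrt (n : ℝ))⁻¹ * (θ (.inr k) *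
        (deriv σ ((Real.sqrt (d0 : ℝ))⁻¹ * ∑ j : Fin d0, θ (.inl (k, j)) * y j) *
          ((Real.sqrt (d0 : ℝ))⁻¹ * y l))) := by
    intro y k l
    rw [(net_hasFDerivAt σ hσ d0 n θ y).fderiv]
    simp only [ContinuousLinearMap.smul_apply, ContinuousLinearMap.sum_apply,
      ContinuousLinearMap.add_apply, ContinuousLinearMap.proj_apply, Pi.single_apply, smul_eq_mul,
      Sum.inl.injEq, Prod.mk.injEq, reduceCtorEq, if_false, mul_zero, add_zero]
    congr 1
    rw [Finset.sum_eq_single k]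
    · simp
    · intro b _ hb
      simp [hb]
    · simp
  unfold NTK
  rw [Fintype.sum_sum_type, Fintype.sum_prod_type, ← Finset.sum_add_distrib, Finset.mul_sum]
  refine Finset.sum_congr rfl fun i _ => ?_
  simp only [hr, hl, neuron, blk, ← hs]
  rw [mul_add, add_comm]
  congr 1
  · ring
  · simp only [Finset.mul_sum]
    refine Finset.sum_congr rfl fun j _ => ?_
    ring

/-- All finite moments. -/
def AllLp {Ω : Type*} [MeasurableSpace Ω] (P : Measure Ω) (f : Ω → ℝ) : Prop :=
  ∀ q : NNReal, MemLp f q P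

theorem AllLp.add {Ω : Type*} [MeasurableSpace Ω] {P : Measure Ω} {f g : Ω → ℝ}
    (hf : AllLp P f) (hg : AllLp P g) : AllLp P (fun ω => f ω + g ω) :=
  fun q => (hf q).add (hg q)

theorem AllLp.mul {Ω : Type*} [MeasurableSpace Ω] {P : Measure Ω} {f g : Ω → ℝ}
    (hf : AllLp P f) (hg : AllLp P g) : AllLp P (fun ω => f ω * g ω) := by
  intro q
  have : ENNReal.HolderTriple ((2 * q : NNReal) : ENNReal) ((2 * q : NNReal) : ENNReal) q := by
    constructor
    push_cast
    rw [ENNReal.mul_inv (by simp) (by simp), ← add_mul, ENNReal.inv_two_add_inv_two, one_mul]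
  exact (hg (2 * q)).mul (hf (2 * q))

theorem AllLp.const {Ω : Type*} [MeasurableSpace Ω] {P : Measure Ω} [IsFiniteMeasure P]
    (c : ℝ) : AllLp P (fun _ => c) := fun _ => memLp_const c

theorem AllLp.pow {Ω : Type*} [MeasurableSpace Ω] {P : Measure Ω} [IsFiniteMeasure P]
    {f : Ω → ℝ} (hf : AllLp P f) (r : ℕ) : AllLp P (fun ω => f ω ^ r) := by
  induction r with
  | zero => simpa using AllLp.const (P := P) 1
  | succ k ih => simpa only [pow_succ] using ih.mul hf

theorem AllLp.abs {Ω : Type*} [MeasurableSpace Ω] {P : Measure Ω}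
    {f : Ω → ℝ} (hf : AllLp P f) : AllLp P (fun ω => |f ω|) := fun q => (hf q).norm

theorem AllLp.sum {Ω ι : Type*} [MeasurableSpace Ω] {P : Measure Ω}
    {f : ι → Ω → ℝ} (s : Finset ι) (hf : ∀ i, AllLp P (f i)) :
    AllLp P (fun ω => ∑ i ∈ s, f i ω) := fun q => memLp_finsetSum s fun i _ => hf i q

theorem AllLp.comp_poly {Ω : Type*} [MeasurableSpace Ω] {P : Measure Ω} [IsFiniteMeasure P]
    {f : Ω → ℝ} (hf : AllLp P f) (g : ℝ → ℝ) (hg : Continuous g)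
    (C : ℝ) (r : ℕ) (hb : ∀ t, |g t| ≤ C * (1 + |t|) ^ r) : AllLp P (fun ω => g (f ω)) := by
  intro q
  refine MemLp.mono' (((AllLp.const C).mul (((AllLp.const 1).add hf.abs).pow r)) q)
    (hg.comp_aestronglyMeasurable (hf q).1) (Filter.Eventually.of_forall fun ω => hb _)

/-- Law of one block of parameters. -/
noncomputable def blkLaw (d0 : ℕ) : Measure (Option (Fin d0) → ℝ) :=
  Measure.pi fun _ => gaussianReal 0 1

instance (d0 : ℕ) : IsProbabilityMeasure (blkLaw d0) := by unfold blkLaw; infer_instance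
instance (d0 n : ℕ) : IsProbabilityMeasure (gaussParam d0 n) := by
  unfold gaussParam; infer_instance

theorem allLp_coord (d0 : ℕ) (o : Option (Fin d0)) : AllLp (blkLaw d0) (fun z => z o) := by
  intro q
  have h : MeasurePreserving (Function.eval o) (blkLaw d0) (gaussianReal 0 1) :=
    measurePreserving_eval _ o
  exact (memLp_id_gaussianReal q).comp_measurePreserving h

theorem neuron_allLp (σ : ℝ → ℝ) (hσs : ContDiff ℝ (⊤ : ℕ∞) σ)
    (hσp : ∀ m : ℕ, ∃ C : ℝ, ∃ r : ℕ, ∀ t : ℝ, |iteratedDeriv m σ t| ≤ C * (1 + |t|) ^ r)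
    (d0 : ℕ) (x x' : Fin d0 → ℝ) : AllLp (blkLaw d0) (neuron σ d0 x x') := by
  obtain ⟨C0, r0, h0⟩ := hσp 0
  obtain ⟨C1, r1, h1⟩ := hσp 1
  simp only [iteratedDeriv_zero, iteratedDeriv_one] at h0 h1
  have hc : Continuous (deriv σ) := hσs.continuous_deriv (by simp)
  have ha : ∀ y : Fin d0 → ℝ, AllLp (blkLaw d0)
      (fun z => (Real.sqrt (d0 : ℝ))⁻¹ * ∑ j : Fin d0, z (some j) * y j) := fun y =>
    (AllLp.const _).mul (AllLp.sum _ fun j => (allLp_coord d0 (some j)).mul (AllLp.const _))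
  exact (((ha x).comp_poly σ hσs.continuous C0 r0 h0).mul
      ((ha x').comp_poly σ hσs.continuous C0 r0 h0)).add
    ((((allLp_coord d0 none).mul (allLp_coord d0 none)).mul
      (((ha x).comp_poly _ hc C1 r1 h1).mul ((ha x').comp_poly _ hc C1 r1 h1))).mul
      (AllLp.const _))

theorem neuron_measurable (σ : ℝ → ℝ) (hσs : ContDiff ℝ (⊤ : ℕ∞) σ)
    (d0 : ℕ) (x x' : Fin d0 → ℝ) : Measurable (neuron σ d0 x x') := by
  have hc : Continuous (deriv σ) := hσs.continuous_deriv (by simp)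
  have h0 := hσs.continuous
  refine Continuous.measurable ?_
  unfold neuron
  fun_prop

theorem coords_indep (d0 n : ℕ) :
    iIndepFun (fun (μ : Param d0 n) (θ : Param d0 n → ℝ) => θ μ) (gaussParam d0 n) :=
  iIndepFun_pi (X := fun _ t => t) fun _ => aemeasurable_id

theorem blk_measurePreserving (d0 n : ℕ) (i : Fin n) :
    MeasurePreserving (fun (θ : Param d0 n → ℝ) o => θ (blk d0 n i o))
      (gaussParam d0 n) (blkLaw d0) := by
  refine ⟨by fun_prop, ?_⟩
  have h := (coords_indep d0 n).precomp (blk_injective d0 n i)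
  rw [iIndepFun_iff_map_fun_eq_pi_map (fun o => (measurable_pi_apply _).aemeasurable)] at h
  refine h.trans ?_
  unfold blkLaw
  congr 1
  funext o
  exact (measurePreserving_eval (fun _ : Param d0 n => gaussianReal 0 1) (blk d0 n i o)).map_eq

theorem blk_indep (d0 n : ℕ) (F : (Option (Fin d0) → ℝ) → ℝ) (hF : Measurable F)
    {i k : Fin n} (hik : i ≠ k) :
    IndepFun (fun θ : Param d0 n → ℝ => F (fun o => θ (blk d0 n i o)))
      (fun θ : Param d0 n → ℝ => F (fun o => θ (blk d0 n k o))) (gaussParam d0 n) := by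
  classical
  have hd : Disjoint (Finset.univ.image (blk d0 n i)) (Finset.univ.image (blk d0 n k)) := by
    rw [Finset.disjoint_left]
    intro μ h1 h2
    simp only [Finset.mem_image, Finset.mem_univ, true_and] at h1 h2
    obtain ⟨a, rfl⟩ := h1
    obtain ⟨b, hb⟩ := h2
    cases a <;> cases b <;> simp_all [blk]
  have h := (coords_indep d0 n).indepFun_finset _ _ hd (by intro o; fun_prop)
  have hm : ∀ l : Fin n, Measurable
      (fun z : (Finset.univ.image (blk d0 n l) → ℝ) =>
        F (fun o => z ⟨blk d0 n l o, Finset.mem_image_of_mem _ (Finset.mem_univ o)⟩)) :=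
    fun l => hF.comp (by fun_prop)
  exact h.comp (hm i) (hm k)

/-- for a one-hidden-layer network of width `n` with smooth activation `σ`
all of whose derivatives are polynomially bounded, the variance of the NTK at fixed inputs
is bounded by `K / n` with `K` independent of `n`. -/
theorem one_hidden_layer_ntk_variance (σ : ℝ → ℝ) (hσs : ContDiff ℝ (⊤ : ℕ∞) σ)
    (hσp : ∀ m : ℕ, ∃ C : ℝ, ∃ r : ℕ, ∀ t : ℝ, |iteratedDeriv m σ t| ≤ C * (1 + |t|) ^ r)
    (d0 : ℕ) (hd0 : 0 < d0) (x x' : Fin d0 → ℝ) :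
    ∃ K : ℝ, ∀ n : ℕ, 1 ≤ n →
      (∫ θ, (NTK σ d0 n θ x x') ^ 2 ∂(gaussParam d0 n))
        - (∫ θ, NTK σ d0 n θ x x' ∂(gaussParam d0 n)) ^ 2 ≤ K / (n : ℝ) := by
  have hd : Differentiable ℝ σ := hσs.differentiable (by simp)
  have hL := neuron_allLp σ hσs hσp d0 x x'
  have hm := neuron_measurable σ hσs d0 x x'
  refine ⟨Var[neuron σ d0 x x'; blkLaw d0], fun n hn => ?_⟩
  have hn0 : (n : ℝ) ≠ 0 := by positivity
  set Y : Fin n → (Param d0 n → ℝ) → ℝ :=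
    fun i θ => neuron σ d0 x x' (fun o => θ (blk d0 n i o)) with hY
  have hYL : ∀ i, MemLp (Y i) 2 (gaussParam d0 n) := fun i =>
    (show MemLp _ 2 _ from hL 2).comp_measurePreserving (blk_measurePreserving d0 n i)
  have hYv : ∀ i, Var[Y i; gaussParam d0 n] = Var[neuron σ d0 x x'; blkLaw d0] := by
    intro i
    have hp := blk_measurePreserving d0 n i
    rw [← hp.map_eq, variance_map hm.aemeasurable hp.measurable.aemeasurable]
    rfl
  have hN : (fun θ => NTK σ d0 n θ x x') = fun θ => (n : ℝ)⁻¹ * (∑ i, Y i) θ := by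
    funext θ
    rw [NTK_eq σ hd, Finset.sum_apply]
  have hS : MemLp (∑ i, Y i) 2 (gaussParam d0 n) := memLp_finsetSum' _ fun i _ => hYL i
  have hNL : MemLp (fun θ => NTK σ d0 n θ x x') 2 (gaussParam d0 n) := by
    rw [hN]; exact hS.const_mul _
  have hv := variance_eq_sub hNL
  have hv2 : Var[fun θ => NTK σ d0 n θ x x'; gaussParam d0 n] =
      Var[neuron σ d0 x x'; blkLaw d0] / n := by
    rw [hN, variance_const_mul, IndepFun.variance_sum (fun i _ => hYL i)
      (fun i _ k _ hik => blk_indep d0 n _ hm hik)]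
    simp only [hYv, Finset.sum_const, Finset.card_univ, Fintype.card_fin, nsmul_eq_mul]
    field_simp
  rw [← hv2, hv]
  exact le_rfl

end OneHiddenLayer
end
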